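/- arXiv:1505.02003 — 2 statements merged into one kernel-verified Lean document; each statement's English description precedes it below -/
import Mathlib

section
/- Let u = (u_j)_{j≥1} be a nonincreasing sequence of positive reals and let 1 < p < 2. If liminf_{j→∞} log(u_j^{−1}) / j^{(p−1)/(2−p)} > 0, then there exist constants C, c > 0, independent of s and n, such that e(n, s, S_{s,u}) ≤ C·exp(−c·(log n)^p) for all s, n ∈ ℕ. -/
open MeasureTheory Matrix Filter
open scoped ENNReal BigOperators Topology

noncomputable section

/-- The `b`-adic digit of `k : ℕ` at place `b^i` (i.e. the `(i+1)`-st digit). -/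
def natDigit (b k i : ℕ) : ℕ := k / b ^ i % b

/-- The `(i+1)`-st `b`-adic digit of a real number `x ∈ [0,1)`
(using the expansion in which infinitely many digits differ from `b-1`). -/
def realDigit (b : ℕ) (x : ℝ) (i : ℕ) : ℕ := (⌊x * (b : ℝ) ^ (i + 1)⌋ % (b : ℤ)).toNat

/-- The `k`-th one-dimensional `b`-adic Walsh function. -/
def wal1 (b k : ℕ) (x : ℝ) : ℂ :=
  Complex.exp (2 * Real.pi * Complex.I / (b : ℂ) *
    ((∑ i ∈ Finset.range k, natDigit b k i * realDigit b x i : ℕ) : ℂ))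

/-- The `k`-th `s`-dimensional `b`-adic Walsh function. -/
def wal (b : ℕ) {s : ℕ} (k : Fin s → ℕ) (x : Fin s → ℝ) : ℂ :=
  ∏ j, wal1 b (k j) (x j)

/-- The unit cube `[0,1)^s`. -/
def unitCube (s : ℕ) : Set (Fin s → ℝ) := Set.univ.pi fun _ => Set.Ico (0 : ℝ) 1

/-- The `k`-th Walsh coefficient of `f`. -/
def walshCoeff (b : ℕ) {s : ℕ} (f : (Fin s → ℝ) → ℝ) (k : Fin s → ℕ) : ℂ :=
  ∫ x in unitCube s, (f x : ℂ) * (starRingEnd ℂ) (wal b k x)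

/-- The generalized Dick weight `μ_a(k)`, one-dimensional case. -/
def dickWt (b : ℕ) (a : ℝ) (k : ℕ) : ℝ :=
  ∑ i ∈ Finset.range k, if natDigit b k i ≠ 0 then ((i : ℝ) + 1 + a) else 0

/-- The generalized Dick weight `μ_a(k)` for vectors. -/
def dickWtV (b : ℕ) {s : ℕ} (a : Fin s → ℝ) (k : Fin s → ℕ) : ℝ :=
  ∑ j, dickWt b (a j) (k j)

/-- The modified Dick weight `μ'_a(k)`, one-dimensional case. -/
def mdickWt (b : ℕ) (a : ℝ) (k : ℕ) : ℝ :=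
  ∑ i ∈ Finset.range k, if natDigit b k i ≠ 0 then max ((i : ℝ) + 1 + a) 1 else 0

/-- The modified Dick weight `μ'_a(k)` for vectors. -/
def mdickWtV (b : ℕ) {s : ℕ} (a : Fin s → ℝ) (k : Fin s → ℕ) : ℝ :=
  ∑ j, mdickWt b (a j) (k j)

/-- Digitwise subtraction modulo `b` of natural numbers. -/
def dsub (b k k' : ℕ) : ℕ :=
  ∑ i ∈ Finset.range (k + k' + 1), ((natDigit b k i + (b - natDigit b k' i)) % b) * b ^ i

/-- The integral of `f` over the unit cube. -/
def intBox (s : ℕ) (f : (Fin s → ℝ) → ℝ) : ℝ := ∫ x in unitCube s, f x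

/-- Membership in the Walsh space `W_{s,a}`: `f` equals its (convergent) Walsh series
and has finite norm. -/
def MemW (b : ℕ) {s : ℕ} (a : Fin s → ℝ) (f : (Fin s → ℝ) → ℝ) : Prop :=
  (∀ x ∈ unitCube s, HasSum (fun k : Fin s → ℕ => walshCoeff b f k * wal b k x) ((f x : ℂ))) ∧
  BddAbove (Set.range fun k : Fin s → ℕ => ‖walshCoeff b f k‖ * (b : ℝ) ^ dickWtV b a k)

/-- The norm of the Walsh space `W_{s,a}`. -/
def normW (b : ℕ) {s : ℕ} (a : Fin s → ℝ) (f : (Fin s → ℝ) → ℝ) : ℝ :=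
  ⨆ k : Fin s → ℕ, ‖walshCoeff b f k‖ * (b : ℝ) ^ dickWtV b a k

/-- Membership in the modified Walsh space `W'_{s,a}`. -/
def MemW' (b : ℕ) {s : ℕ} (a : Fin s → ℝ) (f : (Fin s → ℝ) → ℝ) : Prop :=
  (∀ x ∈ unitCube s, HasSum (fun k : Fin s → ℕ => walshCoeff b f k * wal b k x) ((f x : ℂ))) ∧
  BddAbove (Set.range fun k : Fin s → ℕ => ‖walshCoeff b f k‖ * (b : ℝ) ^ mdickWtV b a k)

/-- The norm of the modified Walsh space `W'_{s,a}`. -/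
def normW' (b : ℕ) {s : ℕ} (a : Fin s → ℝ) (f : (Fin s → ℝ) → ℝ) : ℝ :=
  ⨆ k : Fin s → ℕ, ‖walshCoeff b f k‖ * (b : ℝ) ^ mdickWtV b a k

/-- The worst-case error of the algorithm `A` over the unit ball of `(H, N)`. -/
def worstErr (s : ℕ) (H : Set ((Fin s → ℝ) → ℝ)) (N : ((Fin s → ℝ) → ℝ) → ℝ)
    (A : ((Fin s → ℝ) → ℝ) → ℝ) : ℝ≥0∞ :=
  ⨆ (f : (Fin s → ℝ) → ℝ) (_ : f ∈ H) (_ : N f ≤ 1), ENNReal.ofReal |intBox s f - A f|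

/-- The `n`-th minimal worst-case error over all algorithms using `n` function values
at points of the unit cube. -/
def minErr (n s : ℕ) (H : Set ((Fin s → ℝ) → ℝ)) (N : ((Fin s → ℝ) → ℝ) → ℝ) : ℝ≥0∞ :=
  ⨅ (t : Fin n → Fin s → ℝ) (_ : ∀ i, t i ∈ unitCube s) (φ : (Fin n → ℝ) → ℝ),
    worstErr s H N fun f => φ fun i => f (t i)

/-- Partial derivative in the `j`-th coordinate. -/
def pd {s : ℕ} (j : Fin s) (f : (Fin s → ℝ) → ℝ) : (Fin s → ℝ) → ℝ :=
  fun x => deriv (fun t => f (Function.update x j t)) (x j)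

/-- The mixed partial derivative `f^{(α)}`. -/
def mpd {s : ℕ} (α : Fin s → ℕ) (f : (Fin s → ℝ) → ℝ) : (Fin s → ℝ) → ℝ :=
  (List.finRange s).foldr (fun j g => (pd j)^[α j] g) f

/-- Membership in the space `S_{s,u}` of smooth functions. -/
def MemS {s : ℕ} (u : Fin s → ℝ) (f : (Fin s → ℝ) → ℝ) : Prop :=
  ContDiff ℝ (⊤ : ℕ∞) f ∧
  BddAbove (Set.range fun α : Fin s → ℕ =>
    (∫ x in unitCube s, |mpd α f x|) / ∏ j, u j ^ α j)

/-- The norm of the space `S_{s,u}`. -/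
def normS {s : ℕ} (u : Fin s → ℝ) (f : (Fin s → ℝ) → ℝ) : ℝ :=
  ⨆ α : Fin s → ℕ, (∫ x in unitCube s, |mpd α f x|) / ∏ j, u j ^ α j

/-- The column vector of the first `m` `b`-adic digits of `k`. -/
def trunc (b m k : ℕ) : Fin m → ZMod b := fun i => (natDigit b k (i : ℕ) : ZMod b)

/-- The `m`-th point of the digital net determined by generating matrices `G`. -/
def netPoint (b : ℕ) {s l d : ℕ} (G : Fin s → Matrix (Fin l) (Fin d) (ZMod b)) (m : ℕ) :
    Fin s → ℝ :=
  fun j => ∑ i : Fin l, (((G j).mulVec (trunc b d m)) i).val / (b : ℝ) ^ ((i : ℕ) + 1)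

/-- The dual net of the digital net determined by `G`. -/
def dualNet (b : ℕ) {s l d : ℕ} (G : Fin s → Matrix (Fin l) (Fin d) (ZMod b)) :
    Set (Fin s → ℕ) :=
  {k | ∑ j, (G j)ᵀ.mulVec (trunc b l (k j)) = 0}

/-- The QMC algorithm given by the digital net with generating matrices `G`. -/
def qmcNet (b : ℕ) {s l d : ℕ} (G : Fin s → Matrix (Fin l) (Fin d) (ZMod b))
    (f : (Fin s → ℝ) → ℝ) : ℝ :=
  ((b : ℝ) ^ d)⁻¹ * ∑ m ∈ Finset.range (b ^ d), f (netPoint b G m)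

/-- `n_j = #{i ∈ ℕ : i + a ≤ 1}` (with `i` ranging over positive integers). -/
def negCount (a : ℝ) : ℕ := Set.ncard {i : ℕ | 0 < i ∧ (i : ℝ) + a ≤ 1}


abbrev Sm {s : ℕ} (f : (Fin s → ℝ) → ℝ) : Prop := ContDiff ℝ (⊤ : ℕ∞) f

lemma hasDerivAt_upd {s : ℕ} (j : Fin s) (f : (Fin s → ℝ) → ℝ) (hf : Sm f) (x : Fin s → ℝ) (t : ℝ) :
    HasDerivAt (fun t => f (Function.update x j t))
      (fderiv ℝ f (Function.update x j t) (Pi.single j 1)) t := by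
  have h1 : HasFDerivAt f (fderiv ℝ f (Function.update x j t)) (Function.update x j t) :=
    (hf.differentiable (by simp)).differentiableAt.hasFDerivAt
  exact h1.comp_hasDerivAt t (hasDerivAt_update x j t)

lemma pd_eq {s : ℕ} (j : Fin s) (f : (Fin s → ℝ) → ℝ) (hf : Sm f) :
    pd j f = fun x => fderiv ℝ f x (Pi.single j 1) := by
  funext x
  have := (hasDerivAt_upd j f hf x (x j)).deriv
  simpa [pd] using this

lemma pd_upd {s : ℕ} (j : Fin s) (f : (Fin s → ℝ) → ℝ) (hf : Sm f) (x : Fin s → ℝ) (t : ℝ) :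
    HasDerivAt (fun t => f (Function.update x j t)) (pd j f (Function.update x j t)) t := by
  rw [pd_eq j f hf]; exact hasDerivAt_upd j f hf x t

lemma Sm.pd {s : ℕ} {j : Fin s} {f : (Fin s → ℝ) → ℝ} (hf : Sm f) : Sm (pd j f) := by
  rw [pd_eq j f hf]
  exact (hf.fderiv_right (by simp)).clm_apply contDiff_const

lemma Sm.pdit {s : ℕ} {j : Fin s} {f : (Fin s → ℝ) → ℝ} (hf : Sm f) (k : ℕ) :
    Sm ((_root_.pd j)^[k] f) := by
  induction k with
  | zero => simpa using hf
  | succ k ih => rw [Function.iterate_succ_apply']; exact ih.pd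

lemma pd_comm {s : ℕ} (i j : Fin s) (f : (Fin s → ℝ) → ℝ) (hf : Sm f) :
    pd i (pd j f) = pd j (pd i f) := by
  have hd : Differentiable ℝ (fderiv ℝ f) := (hf.fderiv_right (m := 1) (by norm_num; exact WithTop.coe_le_coe.2 le_top)).differentiable (by simp)
  have key : ∀ i j : Fin s, ∀ x, pd i (pd j f) x
      = fderiv ℝ (fderiv ℝ f) x (Pi.single i 1) (Pi.single j 1) := by
    intro i j x
    rw [pd_eq i _ hf.pd, pd_eq j f hf]
    beta_reduce
    rw [fderiv_clm_apply hd.differentiableAt (differentiableAt_const _)]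
    simp
  funext x
  rw [key, key]
  have := (hf.contDiffAt (x := x)).isSymmSndFDerivAt (by simp; exact WithTop.coe_le_coe.2 le_top)
  exact this.eq _ _

lemma pd_it_comm {s : ℕ} (i j : Fin s) (n : ℕ) (f : (Fin s → ℝ) → ℝ) (hf : Sm f) :
    pd j ((pd i)^[n] f) = (pd i)^[n] (pd j f) := by
  induction n with
  | zero => rfl
  | succ n ih => rw [Function.iterate_succ_apply', Function.iterate_succ_apply',
      pd_comm _ _ _ (hf.pdit n), ih]

def PD {s : ℕ} (l : List (Fin s)) (α : Fin s → ℕ) (f : (Fin s → ℝ) → ℝ) : (Fin s → ℝ) → ℝ :=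
  l.foldr (fun j g => (pd j)^[α j] g) f

lemma Sm.PD {s : ℕ} {l : List (Fin s)} {α : Fin s → ℕ} {f : (Fin s → ℝ) → ℝ} (hf : Sm f) :
    Sm (PD l α f) := by
  induction l with
  | nil => exact hf
  | cons i l ih => exact ih.pdit _

lemma PD_pd {s : ℕ} (l : List (Fin s)) (α : Fin s → ℕ) (j : Fin s) (f : (Fin s → ℝ) → ℝ) (hf : Sm f) :
    PD l α (pd j f) = pd j (PD l α f) := by
  induction l with
  | nil => rfl
  | cons i l ih =>
    change (pd i)^[α i] (PD l α (pd j f)) = pd j ((pd i)^[α i] (PD l α f))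
    rw [ih, pd_it_comm _ _ _ _ hf.PD]

lemma PD_add {s : ℕ} (l : List (Fin s)) (α : Fin s → ℕ) (j : Fin s) (f : (Fin s → ℝ) → ℝ) (hf : Sm f)
    (hl : l.Nodup) :
    PD l (α + Pi.single j 1) f = if j ∈ l then pd j (PD l α f) else PD l α f := by
  induction l with
  | nil => rfl
  | cons i l ih =>
    have ih := ih hl.of_cons
    have hi : i ∉ l := (List.nodup_cons.1 hl).1
    change (pd i)^[(α + Pi.single j 1 : Fin s → ℕ) i] (PD l (α + Pi.single j 1) f)
      = if j ∈ i :: l then pd j ((pd i)^[α i] (PD l α f)) else (pd i)^[α i] (PD l α f)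
    rw [ih]
    by_cases hij : j = i
    · subst hij
      simp [hi, Function.iterate_succ_apply']
    · have : (α + Pi.single j 1 : Fin s → ℕ) i = α i := by
        simp [Pi.single_apply, Ne.symm hij]
      rw [this]
      by_cases hj : j ∈ l
      · simp [hj, pd_it_comm _ _ _ _ hf.PD]
      · simp [hj, hij]

lemma pd_mpd {s : ℕ} (α : Fin s → ℕ) (j : Fin s) (f : (Fin s → ℝ) → ℝ) (hf : Sm f) :
    pd j (mpd α f) = mpd (α + Pi.single j 1) f := by
  have := PD_add (List.finRange s) α j f hf (List.nodup_finRange s)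
  rw [if_pos (List.mem_finRange j)] at this
  exact this.symm

lemma mpd_pd {s : ℕ} (α : Fin s → ℕ) (j : Fin s) (f : (Fin s → ℝ) → ℝ) (hf : Sm f) :
    mpd α (pd j f) = mpd (α + Pi.single j 1) f := by
  rw [← pd_mpd _ _ _ hf]; exact PD_pd _ _ _ _ hf

lemma Sm.mpd {s : ℕ} {α : Fin s → ℕ} {f : (Fin s → ℝ) → ℝ} (hf : Sm f) : Sm (mpd α f) :=
  Sm.PD (l := List.finRange s) hf

lemma mpd_zero {s : ℕ} (f : (Fin s → ℝ) → ℝ) : mpd 0 f = f := by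
  have : ∀ l : List (Fin s), PD l 0 f = f := by
    intro l
    induction l with
    | nil => rfl
    | cons i l ih => change (pd i)^[0] (PD l 0 f) = f; simpa using ih
  exact this _

/-- pointwise class -/
def Cls {s : ℕ} (u : Fin s → ℝ) (f : (Fin s → ℝ) → ℝ) (B : ℝ) : Prop :=
  Sm f ∧ ∀ α, ∀ x ∈ unitCube s, |mpd α f x| ≤ B * ∏ j, u j ^ α j

lemma prod_single {s : ℕ} (u : Fin s → ℝ) (α : Fin s → ℕ) (j : Fin s) :
    ∏ i, u i ^ (α + Pi.single j 1 : Fin s → ℕ) i = (∏ i, u i ^ α i) * u j := by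
  simp only [Pi.add_apply, pow_add, Finset.prod_mul_distrib]
  congr 1
  rw [Finset.prod_eq_single j] <;> simp +contextual [Pi.single_apply]

lemma Cls.pd {s : ℕ} {u : Fin s → ℝ} {f : (Fin s → ℝ) → ℝ} {B : ℝ} (h : Cls u f B) (j : Fin s) :
    Cls u (pd j f) (B * u j) := by
  refine ⟨h.1.pd, fun α x hx => ?_⟩
  rw [mpd_pd _ _ _ h.1]
  refine (h.2 _ x hx).trans (le_of_eq ?_)
  rw [prod_single]; ring

lemma Cls.pdit {s : ℕ} {u : Fin s → ℝ} {f : (Fin s → ℝ) → ℝ} {B : ℝ} (h : Cls u f B) (j : Fin s)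
    (k : ℕ) : Cls u ((_root_.pd j)^[k] f) (B * u j ^ k) := by
  induction k with
  | zero => simpa using h
  | succ k ih =>
    rw [Function.iterate_succ_apply', pow_succ, ← mul_assoc]; exact ih.pd j

lemma sob1 (h h' : ℝ → ℝ) (hd : ∀ t, HasDerivAt h (h' t) t) (hc : Continuous h') (a : ℝ)
    (ha : a ∈ Set.Ico (0:ℝ) 1) :
    ‖h a‖ₑ ≤ ∫⁻ t in Set.Ico (0:ℝ) 1, (‖h t‖ₑ + ‖h' t‖ₑ) := by
  have hch : Continuous h := continuous_iff_continuousAt.2 fun t => (hd t).continuousAt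
  have key : ∀ t ∈ Set.Ico (0:ℝ) 1, ‖h a‖ₑ ≤ ‖h t‖ₑ + ∫⁻ r in Set.Ico (0:ℝ) 1, ‖h' r‖ₑ := by
    intro t ht
    have e : h a = h t + ∫ r in t..a, h' r := by
      rw [intervalIntegral.integral_eq_sub_of_hasDerivAt (fun r _ => hd r) (hc.intervalIntegrable _ _)]
      ring
    rw [e]
    refine (enorm_add_le _ _).trans ?_
    gcongr
    have : ‖∫ r in t..a, h' r‖ₑ ≤ ∫⁻ r in Set.uIoc t a, ‖h' r‖ₑ := by
      rw [← ofReal_norm, intervalIntegral.norm_intervalIntegral_eq, ofReal_norm]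
      exact enorm_integral_le_lintegral_enorm _
    refine this.trans (lintegral_mono_set ?_)
    intro r hr
    rw [Set.mem_uIoc] at hr
    rcases hr with hr | hr
    · exact ⟨by linarith [ht.1, hr.1], by linarith [ha.2, hr.2]⟩
    · exact ⟨by linarith [ha.1, hr.1], by linarith [ht.2, hr.2]⟩
  have hm : Measurable fun t => ‖h t‖ₑ := hch.measurable.enorm
  calc ‖h a‖ₑ = ∫⁻ t in Set.Ico (0:ℝ) 1, ‖h a‖ₑ := by simp
    _ ≤ ∫⁻ t in Set.Ico (0:ℝ) 1, (‖h t‖ₑ + ∫⁻ r in Set.Ico (0:ℝ) 1, ‖h' r‖ₑ) :=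
        setLIntegral_mono' measurableSet_Ico key
    _ = _ := by
        rw [lintegral_add_left hm, lintegral_add_left hm]; simp

def mu (s : ℕ) : Fin s → Measure ℝ := fun _ => volume.restrict (Set.Ico (0:ℝ) 1)

instance (s : ℕ) (j : Fin s) : SigmaFinite (mu s j) := by unfold mu; infer_instance

lemma sob2 {s : ℕ} (g : (Fin s → ℝ) → ℝ) (hg : Sm g) (j : Fin s) (S : Finset (Fin s)) (hj : j ∉ S)
    (x : Fin s → ℝ) (hx : x ∈ unitCube s) :
    lmarginal (mu s) S (fun z => ‖g z‖ₑ) x ≤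
      lmarginal (mu s) (insert j S) (fun z => ‖g z‖ₑ) x
      + lmarginal (mu s) (insert j S) (fun z => ‖pd j g z‖ₑ) x := by
  have m1 : Measurable fun z => ‖g z‖ₑ := hg.continuous.measurable.enorm
  have m2 : Measurable fun z => ‖pd j g z‖ₑ := hg.pd.continuous.measurable.enorm
  rw [lmarginal_insert' _ m1 hj, lmarginal_insert' _ m2 hj]
  unfold lmarginal
  rw [← lintegral_add_left]
  · apply lintegral_mono
    intro y
    set w := Function.updateFinset x S y with hw
    have hwj : w j = x j := by simp [hw, Function.updateFinset, hj]
    have := sob1 (fun t => g (Function.update w j t)) (fun t => pd j g (Function.update w j t))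
      (fun t => pd_upd j g hg w t) (hg.pd.continuous.comp (by fun_prop)) (w j)
      (by rw [hwj]; exact hx j (Set.mem_univ _))
    simp only [Function.update_eq_self] at this
    refine this.trans (le_of_eq ?_)
    rw [lintegral_add_left]
    · rfl
    · exact m1.comp (by fun_prop)
  · have : Measurable (fun z => ∫⁻ t, ‖g (Function.update z j t)‖ₑ ∂(mu s j)) := by
      apply Measurable.lintegral_prod_right (f := fun (z : Fin s → ℝ) (t : ℝ) => ‖g (Function.update z j t)‖ₑ)
      refine m1.comp ?_
      exact (continuous_fst.update j continuous_snd).measurable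
    exact this.comp (by fun_prop)

lemma sob3 {s : ℕ} (u : Fin s → ℝ) (hu : ∀ j, 0 < u j) (f : (Fin s → ℝ) → ℝ) (hf : Sm f)
    (S : Finset (Fin s)) : ∀ (B : ℝ), 0 ≤ B →
    (∀ α, ∀ x ∈ unitCube s, lmarginal (mu s) S (fun z => ‖mpd α f z‖ₑ) x ≤
      ENNReal.ofReal (B * ∏ j, u j ^ α j)) →
    Cls u f (B * ∏ j ∈ S, (1 + u j)) := by
  induction S using Finset.induction_on with
  | empty =>
    intro B hB h
    refine ⟨hf, fun α x hx => ?_⟩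
    have := h α x hx
    simp only [lmarginal_empty] at this
    rw [← ofReal_norm, ENNReal.ofReal_le_ofReal_iff] at this
    · simpa using this
    · have : 0 ≤ ∏ j, u j ^ α j := Finset.prod_nonneg fun j _ => (pow_pos (hu j) _).le
      positivity
  | insert j S hj ih =>
    intro B hB h
    have := ih (B * (1 + u j)) (by have := hu j; positivity) ?_
    · rw [Finset.prod_insert hj, ← mul_assoc]; exact this
    · intro α x hx
      have hp : 0 ≤ ∏ j, u j ^ α j := Finset.prod_nonneg fun j _ => (pow_pos (hu j) _).le
      refine (sob2 _ hf.mpd j S hj x hx).trans ?_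
      rw [pd_mpd _ _ _ hf]
      refine (add_le_add (h _ x hx) (h _ x hx)).trans ?_
      rw [prod_single, ← ENNReal.ofReal_add]
      · apply le_of_eq; congr 1; ring
      · positivity
      · have := hu j; positivity

lemma integrableOn_cube {s : ℕ} (g : (Fin s → ℝ) → ℝ) (hg : Continuous g) :
    IntegrableOn g (unitCube s) := by
  have : IntegrableOn g (Set.Icc (0 : Fin s → ℝ) 1) := hg.continuousOn.integrableOn_compact isCompact_Icc
  refine this.mono_set ?_
  intro x hx
  exact ⟨fun j => (hx j (Set.mem_univ _)).1, fun j => (hx j (Set.mem_univ _)).2.le⟩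

lemma vol_cube (s : ℕ) : volume (unitCube s) = 1 := by
  simp [unitCube, Real.volume_pi_Ico, volume_pi, Measure.pi_pi]

lemma cls_of_norm {s : ℕ} (u : Fin s → ℝ) (hu : ∀ j, 0 < u j) (f : (Fin s → ℝ) → ℝ)
    (hf : MemS u f) (hn : normS u f ≤ 1) : Cls u f (∏ j, (1 + u j)) := by
  have h1 : Sm f := hf.1
  have key := sob3 u hu f h1 Finset.univ 1 zero_le_one ?_
  · simpa using key
  intro α x hx
  rw [lmarginal_univ]
  have hp : 0 < ∏ j, u j ^ α j := Finset.prod_pos fun j _ => pow_pos (hu j) _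
  have h2 : (∫ x in unitCube s, |mpd α f x|) / ∏ j, u j ^ α j ≤ 1 :=
    (le_ciSup hf.2 α).trans hn
  rw [div_le_one hp] at h2
  have hmu : Measure.pi (mu s) = volume.restrict (unitCube s) := by
    rw [volume_pi, unitCube, Measure.restrict_pi_pi]; rfl
  rw [hmu, one_mul]
  refine le_trans (le_of_eq ?_) (ENNReal.ofReal_le_ofReal h2)
  rw [ofReal_integral_eq_lintegral_ofReal]
  · simp [← ofReal_norm]
  · exact integrableOn_cube _ h1.mpd.continuous.abs
  · exact Eventually.of_forall fun x => abs_nonneg _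

lemma rolle_it (k : ℕ) : ∀ (φ : ℝ → ℝ), ContDiff ℝ (⊤ : ℕ∞) φ → ∀ z : Fin (k+1) → ℝ, StrictMono z →
    (∀ i, z i ∈ Set.Ico (0:ℝ) 1) → (∀ i, φ (z i) = 0) →
    ∃ ξ ∈ Set.Ico (0:ℝ) 1, iteratedDeriv k φ ξ = 0 := by
  induction k with
  | zero => intro φ _ z _ h0 h1; exact ⟨z 0, h0 0, by simpa using h1 0⟩
  | succ k ih =>
    intro φ hφ z hz h0 h1
    have : ∀ i : Fin (k+1), ∃ ξ ∈ Set.Ioo (z i.castSucc) (z i.succ), deriv φ ξ = 0 := by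
      intro i
      exact exists_deriv_eq_zero (hz Fin.castSucc_lt_succ) hφ.continuous.continuousOn
        ((h1 _).trans (h1 _).symm)
    choose w hw hw0 using this
    have hφ' : ContDiff ℝ (⊤ : ℕ∞) (deriv φ) := by
      have h : ContDiff ℝ ((⊤ : ℕ∞) + 1) φ := by simpa using hφ
      exact (contDiff_succ_iff_deriv.1 h).2.2
    rw [iteratedDeriv_succ']
    refine ih _ hφ' w ?_ ?_ hw0
    · rw [Fin.strictMono_iff_lt_succ]
      intro i
      have a := (hw i.castSucc).2
      have b := (hw i.succ).1
      rw [Fin.succ_castSucc] at a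
      linarith
    · intro i
      exact ⟨(h0 _).1.trans (hw i).1.le, (hw i).2.trans (h0 _).2⟩

lemma iteratedDeriv_poly (q : Polynomial ℝ) (k : ℕ) :
    iteratedDeriv k (fun x => q.eval x) = fun x => (Polynomial.derivative^[k] q).eval x := by
  induction k with
  | zero => simp
  | succ k ih =>
    rw [iteratedDeriv_succ, ih, Function.iterate_succ_apply']
    funext x
    simp

lemma newton_bound (k : ℕ) (y : ℕ → ℝ) (hy : Set.InjOn y (Finset.range (k+1)))
    (hy1 : ∀ i, y i ∈ Set.Ico (0:ℝ) 1) (x : ℝ) (hx : x ∈ Set.Ico (0:ℝ) 1) (φ : ℝ → ℝ)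
    (hφ : ContDiff ℝ (⊤ : ℕ∞) φ) (B : ℝ) (hB : ∀ ξ ∈ Set.Ico (0:ℝ) 1, |iteratedDeriv k φ ξ| ≤ B) :
    |(Lagrange.interpolate (Finset.range (k+1)) y (fun i => φ (y i))).eval x
      - (Lagrange.interpolate (Finset.range k) y (fun i => φ (y i))).eval x| ≤ B / k.factorial := by
  classical
  have hy' : Set.InjOn y (Finset.range k) := hy.mono (by simp)
  set P := Lagrange.interpolate (Finset.range (k+1)) y (fun i => φ (y i)) with hP
  set Q := Lagrange.interpolate (Finset.range k) y (fun i => φ (y i)) with hQ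
  set W := Lagrange.nodal (Finset.range k) y with hW
  have hPd : P.degree < (k+1 : ℕ) := by
    have := Lagrange.degree_interpolate_lt (fun i => φ (y i)) hy
    rwa [Finset.card_range] at this
  have hQd : Q.degree < (k : ℕ) := by
    have := Lagrange.degree_interpolate_lt (fun i => φ (y i)) hy'
    rwa [Finset.card_range] at this
  have hWd : W.degree = (k : ℕ) := by simp [hW, Lagrange.degree_nodal]
  have hWk : W.eval (y k) ≠ 0 := by
    apply Lagrange.eval_nodal_not_at_node
    intro i hi h
    have := hy (by simp) (by simp at hi ⊢; omega) h
    simp at hi; omega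
  have hPv : ∀ i < k+1, P.eval (y i) = φ (y i) := fun i hi =>
    Lagrange.eval_interpolate_at_node _ hy (by simpa using hi)
  have hQv : ∀ i < k, Q.eval (y i) = φ (y i) := fun i hi =>
    Lagrange.eval_interpolate_at_node _ hy' (by simpa using hi)
  set lam : ℝ := (P - Q).eval (y k) / W.eval (y k) with hlam
  have hPQ : P = Q + Polynomial.C lam * W := by
    refine Polynomial.eq_of_degrees_lt_of_eval_index_eq (Finset.range (k+1)) hy ?_ ?_ ?_
    · simpa using hPd
    · rw [Finset.card_range]
      refine (Polynomial.degree_add_le _ _).trans_lt (max_lt (hQd.trans (by exact_mod_cast Nat.lt_succ_self k)) ?_)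
      refine (Polynomial.degree_mul_le _ _).trans_lt ?_
      rw [hWd]
      refine (add_le_add_left Polynomial.degree_C_le _).trans_lt ?_
      rw [zero_add]; exact_mod_cast Nat.lt_succ_self k
    · intro i hi
      rw [Finset.mem_range] at hi
      rcases Nat.lt_succ_iff_lt_or_eq.1 hi with h | h
      · have : W.eval (y i) = 0 := Lagrange.eval_nodal_at_node (by simpa using h)
        simp [hPv i hi, hQv i h, this]
      · subst h
        simp [hlam]
        field_simp
        ring
  have hWder : Polynomial.derivative^[k] W = Polynomial.C (k.factorial : ℝ) := by
    have hnd : (Polynomial.derivative^[k] W).natDegree = 0 := by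
      have := Polynomial.natDegree_iterate_derivative W k
      have h2 : W.natDegree = k := Polynomial.natDegree_eq_of_degree_eq_some hWd
      omega
    rw [Polynomial.eq_C_of_natDegree_eq_zero hnd, Polynomial.coeff_iterate_derivative]
    have h2 : W.natDegree = k := Polynomial.natDegree_eq_of_degree_eq_some hWd
    have h3 : W.coeff k = 1 := by
      have := (Lagrange.nodal_monic (s := Finset.range k) (v := y)).coeff_natDegree
      rwa [← hW, h2] at this
    simp [h3, Nat.descFactorial_self]
  have hPc : ContDiff ℝ (⊤ : ℕ∞) (fun t => P.eval t) := by
    simpa using P.contDiff_aeval (𝕜 := ℝ) (⊤ : ℕ∞)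
  obtain ⟨ξ, hξ, h0⟩ := rolle_it k (fun t => φ t - P.eval t)
    (hφ.sub hPc)
    (fun i => ((Finset.range (k+1)).image y).orderEmbOfFin
      (by rw [Finset.card_image_of_injOn hy]; simp) i)
    (OrderEmbedding.strictMono _)
    (fun i => by
      have := Finset.orderEmbOfFin_mem ((Finset.range (k+1)).image y)
        (by rw [Finset.card_image_of_injOn hy]; simp) i
      obtain ⟨m, _, hm⟩ := Finset.mem_image.1 this
      rw [← hm]; exact hy1 m)
    (fun i => by
      have := Finset.orderEmbOfFin_mem ((Finset.range (k+1)).image y)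
        (by rw [Finset.card_image_of_injOn hy]; simp) i
      obtain ⟨m, hm', hm⟩ := Finset.mem_image.1 this
      rw [← hm, hPv m (by simpa using hm')]; ring)
  have h1 : iteratedDeriv k φ ξ = lam * k.factorial := by
    have e : iteratedDeriv k (fun t => φ t - P.eval t) ξ
        = iteratedDeriv k φ ξ - iteratedDeriv k (fun t => P.eval t) ξ :=
      iteratedDeriv_fun_sub (hφ.of_le (by exact_mod_cast le_top)).contDiffAt
        (hPc.of_le (by exact_mod_cast le_top)).contDiffAt
    rw [e, iteratedDeriv_poly, hPQ, iterate_map_add, Polynomial.iterate_derivative_eq_zero_of_degree_lt hQd,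
      Polynomial.iterate_derivative_C_mul, hWder] at h0
    simp at h0
    linarith
  have hb := hB ξ hξ
  rw [h1, abs_mul, Nat.abs_cast] at hb
  have hW1 : |W.eval x| ≤ 1 := by
    rw [hW, Lagrange.eval_nodal, Finset.abs_prod]
    apply Finset.prod_le_one (fun i _ => abs_nonneg _)
    intro i _
    have := hy1 i
    rw [abs_le]; constructor <;> linarith [this.1, this.2, hx.1, hx.2]
  have : P.eval x - Q.eval x = lam * W.eval x := by rw [hPQ]; simp
  rw [this, abs_mul, le_div_iff₀ (by positivity)]
  calc |lam| * |W.eval x| * k.factorial ≤ |lam| * 1 * k.factorial := by gcongr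
    _ ≤ B := by simpa using hb

lemma oneD (N : ℕ) (t : ℕ → ℝ) (ht : Function.Injective t) (ht1 : ∀ i, t i ∈ Set.Ico (0:ℝ) 1)
    (x : ℝ) (hx : x ∈ Set.Ico (0:ℝ) 1) :
    ∃ c : ℕ → ℕ → ℝ, ∃ y : ℕ → ℝ, (∀ i < N, y i = t i) ∧ (∀ i, y i ∈ Set.Ico (0:ℝ) 1) ∧
      (∀ φ : ℝ → ℝ, ∑ k ∈ Finset.range (N+1), ∑ i ∈ Finset.range (N+1), c k i * φ (y i) = φ x) ∧
      (∀ k < N, ∀ i, k < i → c k i = 0) ∧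
      (∀ k ≤ N, ∀ φ : ℝ → ℝ, ContDiff ℝ (⊤ : ℕ∞) φ → ∀ B,
        (∀ ξ ∈ Set.Ico (0:ℝ) 1, |iteratedDeriv k φ ξ| ≤ B) →
        |∑ i ∈ Finset.range (N+1), c k i * φ (y i)| ≤ B / k.factorial) := by
  classical
  set y : ℕ → ℝ := fun i => if i < N then t i else x with hy
  have hy1 : ∀ i, y i ∈ Set.Ico (0:ℝ) 1 := by
    intro i; simp only [hy]; split_ifs; exacts [ht1 i, hx]
  have hyN : Set.InjOn y (Finset.range N) := by
    intro a ha b hb h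
    simp at ha hb
    simp [hy, ha, hb] at h
    exact ht h
  let L : ℕ → ℕ → ℝ := fun k i =>
    if i < k then (Lagrange.basis (Finset.range k) y i).eval x else 0
  have hL : ∀ k ≤ N+1, ∀ φ : ℝ → ℝ, ∑ i ∈ Finset.range (N+1), L k i * φ (y i)
      = (Lagrange.interpolate (Finset.range k) y (fun i => φ (y i))).eval x := by
    intro k hk φ
    rw [Lagrange.interpolate_apply, Polynomial.eval_finsetSum]
    rw [← Finset.sum_subset (Finset.range_mono hk)]
    · apply Finset.sum_congr rfl
      intro i hi
      simp [L, Finset.mem_range.1 hi]; ring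
    · intro i _ hi
      simp at hi
      simp [L, hi]
  by_cases hxt : ∃ i < N, t i = x
  · obtain ⟨i0, hi0, hxi⟩ := hxt
    refine ⟨fun k i => if k < N then L (k+1) i - L k i else 0, y, fun i hi => by simp [hy, hi], hy1, ?_, ?_, ?_⟩
    · intro φ
      rw [Finset.sum_range_succ]
      simp only [lt_irrefl, if_false, zero_mul, Finset.sum_const_zero, add_zero]
      have : ∀ k ∈ Finset.range N, ∑ i ∈ Finset.range (N+1), (if k < N then L (k+1) i - L k i else 0) * φ (y i)
        = (fun k => ∑ i ∈ Finset.range (N+1), L k i * φ (y i)) (k+1)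
          - (fun k => ∑ i ∈ Finset.range (N+1), L k i * φ (y i)) k := by
        intro k hk
        simp [Finset.mem_range.1 hk, sub_mul, Finset.sum_sub_distrib]
      rw [Finset.sum_congr rfl this, Finset.sum_range_sub (fun k => ∑ i ∈ Finset.range (N+1), L k i * φ (y i)), hL N (by omega), hL 0 (by omega)]
      have hyi : y i0 = x := by simp [hy, hi0, hxi]
      have := Lagrange.eval_interpolate_at_node (fun i => φ (y i)) hyN (by simpa using hi0 : i0 ∈ Finset.range N)
      rw [hyi] at this
      rw [this]; simp
    · intro k hk i hi
      simp [L, hk, show ¬ i < k+1 by omega, show ¬ i < k by omega]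
    · intro k hk φ hφ B hB
      by_cases hkN : k < N
      · simp only [hkN, if_true, sub_mul, Finset.sum_sub_distrib]
        rw [hL _ (by omega), hL _ (by omega)]
        exact newton_bound k y (hyN.mono (by intro a; simp; omega)) hy1 x hx φ hφ B hB
      · simp only [hkN, if_false, zero_mul, Finset.sum_const_zero, abs_zero]
        have := (abs_nonneg _).trans (hB x hx)
        positivity
  · push Not at hxt
    have hyN1 : Set.InjOn y (Finset.range (N+1)) := by
      intro a ha b hb h
      simp at ha hb
      by_cases h1 : a < N <;> by_cases h2 : b < N
      · exact hyN (by simpa using h1) (by simpa using h2) h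
      · simp [hy, h1, h2] at h; exact absurd h (hxt a h1)
      · simp [hy, h1, h2] at h; exact absurd h.symm (hxt b h2)
      · omega
    refine ⟨fun k i => L (k+1) i - L k i, y, fun i hi => by simp [hy, hi], hy1, ?_, ?_, ?_⟩
    · intro φ
      have : ∀ k ∈ Finset.range (N+1), ∑ i ∈ Finset.range (N+1), (L (k+1) i - L k i) * φ (y i)
        = (fun k => ∑ i ∈ Finset.range (N+1), L k i * φ (y i)) (k+1)
          - (fun k => ∑ i ∈ Finset.range (N+1), L k i * φ (y i)) k := by
        intro k hk
        simp [sub_mul, Finset.sum_sub_distrib]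
      rw [Finset.sum_congr rfl this, Finset.sum_range_sub (fun k => ∑ i ∈ Finset.range (N+1), L k i * φ (y i)), hL (N+1) (by omega), hL 0 (by omega)]
      have hyi : y N = x := by simp [hy]
      have := Lagrange.eval_interpolate_at_node (fun i => φ (y i)) hyN1 (by simp : N ∈ Finset.range (N+1))
      rw [hyi] at this
      rw [this]; simp
    · intro k hk i hi
      simp [L, show ¬ i < k+1 by omega, show ¬ i < k by omega]
    · intro k hk φ hφ B hB
      simp only [sub_mul, Finset.sum_sub_distrib]
      rw [hL _ (by omega), hL _ (by omega)]
      exact newton_bound k y (hyN1.mono (by intro a; simp; omega)) hy1 x hx φ hφ B hB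

def TT {s : ℕ} (N : ℕ) (c : ℕ → ℝ) (y : ℕ → ℝ) (j : Fin s) : Module.End ℝ ((Fin s → ℝ) → ℝ) where
  toFun f := fun z => ∑ i ∈ Finset.range (N+1), c i * f (Function.update z j (y i))
  map_add' f g := by
    funext z; simp [mul_add, Finset.sum_add_distrib]
  map_smul' r f := by
    funext z; simp [Finset.mul_sum]; apply Finset.sum_congr rfl; intros; ring

lemma TT_apply {s : ℕ} (N : ℕ) (c : ℕ → ℝ) (y : ℕ → ℝ) (j : Fin s) (f : (Fin s → ℝ) → ℝ) (z) :
    TT N c y j f z = ∑ i ∈ Finset.range (N+1), c i * f (Function.update z j (y i)) := rfl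

lemma Sm.TT {s : ℕ} {N : ℕ} {c : ℕ → ℝ} {y : ℕ → ℝ} {j : Fin s} {f : (Fin s → ℝ) → ℝ} (hf : Sm f) :
    Sm (TT N c y j f) := by
  have h : ∀ a : ℝ, ContDiff ℝ (⊤ : ℕ∞) (fun z : Fin s → ℝ => Function.update z j a) := by
    intro a
    rw [contDiff_pi]
    intro i
    by_cases hij : i = j
    · subst hij; simpa using contDiff_const
    · simpa [Function.update_of_ne hij] using contDiff_apply ℝ ℝ i
  change ContDiff ℝ (⊤ : ℕ∞) (fun z => ∑ i ∈ Finset.range (N+1), c i * f (Function.update z j (y i)))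
  exact ContDiff.sum fun i _ => contDiff_const.mul (hf.comp (h (y i)))

lemma pd_TT {s : ℕ} {N : ℕ} {c : ℕ → ℝ} {y : ℕ → ℝ} {i j : Fin s} (hij : i ≠ j) {f : (Fin s → ℝ) → ℝ} (hf : Sm f) :
    pd i (TT N c y j f) = TT N c y j (pd i f) := by
  funext z
  rw [TT_apply]
  have : HasDerivAt (fun t => TT N c y j f (Function.update z i t))
      (∑ k ∈ Finset.range (N+1), c k * pd i f (Function.update z j (y k))) (z i) := by
    simp only [TT_apply]
    apply HasDerivAt.fun_sum
    intro k _
    apply HasDerivAt.const_mul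
    have := pd_upd i f hf (Function.update z j (y k)) (z i)
    simp only [Function.update_comm hij.symm] at this
    rwa [Function.update_eq_self] at this
  exact this.deriv

lemma pdit_TT {s : ℕ} {N : ℕ} {c : ℕ → ℝ} {y : ℕ → ℝ} {i j : Fin s} (hij : i ≠ j) {f : (Fin s → ℝ) → ℝ} (hf : Sm f)
    (k : ℕ) : (pd i)^[k] (TT N c y j f) = TT N c y j ((pd i)^[k] f) := by
  induction k with
  | zero => rfl
  | succ k ih => rw [Function.iterate_succ_apply', Function.iterate_succ_apply', ih, pd_TT hij (hf.pdit k)]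

lemma iter_upd {s : ℕ} (j : Fin s) (g : (Fin s → ℝ) → ℝ) (hg : Sm g) (z : Fin s → ℝ) (k : ℕ) :
    iteratedDeriv k (fun t => g (Function.update z j t)) = fun t => (pd j)^[k] g (Function.update z j t) := by
  induction k with
  | zero => simp
  | succ k ih =>
    rw [iteratedDeriv_succ, ih, Function.iterate_succ_apply']
    funext t
    exact (pd_upd j _ (hg.pdit k) z t).deriv

lemma Sm.upd {s : ℕ} {j : Fin s} {g : (Fin s → ℝ) → ℝ} (hg : Sm g) (z : Fin s → ℝ) :
    ContDiff ℝ (⊤ : ℕ∞) (fun t => g (Function.update z j t)) := by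
  refine hg.comp ?_
  exact contDiff_update _ z j

lemma upd_cube {s : ℕ} {z : Fin s → ℝ} (hz : z ∈ unitCube s) (j : Fin s) {t : ℝ} (ht : t ∈ Set.Ico (0:ℝ) 1) :
    Function.update z j t ∈ unitCube s := by
  intro i _
  by_cases h : i = j
  · subst h; simpa using ht
  · simpa [Function.update_of_ne h] using hz i (Set.mem_univ _)

section
variable {s : ℕ} (N : ℕ) (c : Fin s → ℕ → ℕ → ℝ) (y : Fin s → ℕ → ℝ) (α : Fin s → ℕ)

def TL (l : List (Fin s)) : Module.End ℝ ((Fin s → ℝ) → ℝ) :=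
  (l.map fun j => TT N (c j (α j)) (y j) j).prod

lemma TL_cons (j : Fin s) (l : List (Fin s)) (f) :
    TL N c y α (j :: l) f = TT N (c j (α j)) (y j) j (TL N c y α l f) := by
  simp [TL]

lemma Sm_TL (l : List (Fin s)) (f) (hf : Sm f) : Sm (TL N c y α l f) := by
  induction l with
  | nil => simpa [TL] using hf
  | cons j l ih => rw [TL_cons]; exact ih.TT

lemma pdit_TL (i : Fin s) (k : ℕ) (l : List (Fin s)) (hi : i ∉ l) (f) (hf : Sm f) :
    (pd i)^[k] (TL N c y α l f) = TL N c y α l ((pd i)^[k] f) := by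
  induction l with
  | nil => simp [TL]
  | cons j l ih =>
    simp only [List.mem_cons, not_or] at hi
    rw [TL_cons, TL_cons, pdit_TT hi.1 (Sm_TL _ _ _ _ _ _ hf), ih hi.2]

lemma TL_bound (u : Fin s → ℝ)
    (hα : ∀ j, α j ≤ N)
    (hc : ∀ j, ∀ k ≤ N, ∀ φ : ℝ → ℝ, ContDiff ℝ (⊤ : ℕ∞) φ → ∀ B,
        (∀ ξ ∈ Set.Ico (0:ℝ) 1, |iteratedDeriv k φ ξ| ≤ B) →
        |∑ i ∈ Finset.range (N+1), c j k i * φ (y j i)| ≤ B / k.factorial)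
    (l : List (Fin s)) (hl : l.Nodup) : ∀ (f) (B), Cls u f B → ∀ z ∈ unitCube s,
    |TL N c y α l f z| ≤ B * (l.map fun j => u j ^ α j / (α j).factorial).prod := by
  induction l with
  | nil =>
    intro f B hf z hz
    have := hf.2 0 z hz
    rw [mpd_zero] at this
    simpa [TL] using this
  | cons j l ih =>
    intro f B hf z hz
    have hj := (List.nodup_cons.1 hl).1
    rw [TL_cons, TT_apply, List.map_cons, List.prod_cons]
    have := hc j (α j) (hα j) (fun t => TL N c y α l f (Function.update z j t))
      ((Sm_TL _ _ _ _ _ _ hf.1).upd z)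
      (B * u j ^ α j * (l.map fun j => u j ^ α j / (α j).factorial).prod) ?_
    · refine this.trans (le_of_eq ?_)
      ring
    · intro ξ hξ
      rw [iter_upd _ _ (Sm_TL _ _ _ _ _ _ hf.1), pdit_TL _ _ _ _ _ _ _ hj _ hf.1]
      exact ih hl.of_cons _ _ (hf.pdit j (α j)) _ (upd_cube hz j hξ)

lemma TL_agree (l : List (Fin s)) (f f0) : ∀ z,
    (∀ w : Fin s → ℝ, (∀ j ∈ l, ∃ i ≤ α j, i ≤ N ∧ w j = y j i) → (∀ j ∉ l, w j = z j) → f w = f0 w) →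
    (∀ j ∈ l, ∀ i, α j < i → c j (α j) i = 0) →
    TL N c y α l f z = TL N c y α l f0 z := by
  induction l with
  | nil =>
    intro z h _
    simp only [TL, List.map_nil, List.prod_nil]
    exact h z (by simp) (by simp)
  | cons j l ih =>
    intro z h hc
    rw [TL_cons, TL_cons, TT_apply, TT_apply]
    apply Finset.sum_congr rfl
    intro i hi
    by_cases hij : α j < i
    · simp [hc j (by simp) i hij]
    · congr 1
      apply ih
      · intro w hw1 hw2
        apply h w
        · intro m hm
          by_cases hml : m ∈ l
          · exact hw1 m hml
          · have hmj : m = j := by simpa [hml] using hm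
            subst hmj
            refine ⟨i, by omega, by simp at hi; omega, ?_⟩
            rw [hw2 m hml]; simp
        · intro m hm
          simp only [List.mem_cons, not_or] at hm
          rw [hw2 m hm.2, Function.update_of_ne hm.1]
      · intro m hm; exact hc m (by simp [hm])
end

lemma ptwise {s : ℕ} (u : Fin s → ℝ) (N : ℕ) (t : ℕ → ℝ) (ht : Function.Injective t)
    (ht1 : ∀ i, t i ∈ Set.Ico (0:ℝ) 1) (Λ : (Fin s → ℕ) → Prop) [DecidablePred Λ]
    (hlow : ∀ α β : Fin s → ℕ, β ≤ α → Λ α → Λ β) (hN : ∀ α, Λ α → ∀ j, α j < N)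
    (f f0 : (Fin s → ℝ) → ℝ) (B : ℝ) (hf : Cls u f B) (hf0 : Cls u f0 B)
    (hag : ∀ β, Λ β → f (fun j => t (β j)) = f0 (fun j => t (β j))) (x : Fin s → ℝ) (hx : x ∈ unitCube s) :
    |f x - f0 x| ≤ ∑ α ∈ (Fintype.piFinset fun _ : Fin s => Finset.range (N+1)).filter (fun α => ¬ Λ α),
      2 * B * ∏ j, (u j ^ α j / (α j).factorial) := by
  have h1 := fun j => oneD N t ht ht1 (x j) (hx j (Set.mem_univ _))
  choose c y hy1 hy2 hsum hzero hbd using h1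
  have hexp : ∀ g : (Fin s → ℝ) → ℝ,
      g x = ∑ α ∈ Fintype.piFinset fun _ : Fin s => Finset.range (N+1), TL N c y α (List.finRange s) g x := by
    intro g
    have e := (MultilinearMap.mkPiAlgebraFin ℝ s (Module.End ℝ ((Fin s → ℝ) → ℝ))).map_sum_finset
      (fun j k => TT N (c j k) (y j) j) (fun _ => Finset.range (N+1))
    simp only [MultilinearMap.mkPiAlgebraFin_apply, List.ofFn_eq_map] at e
    have e2 := congrArg (fun (A : Module.End ℝ ((Fin s → ℝ) → ℝ)) => A g x) e
    simp only [LinearMap.sum_apply, Finset.sum_apply] at e2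
    unfold TL
    rw [← e2]
    have : ∀ l : List (Fin s), ∀ z, (l.map fun j => ∑ k ∈ Finset.range (N+1), TT N (c j k) (y j) j).prod g z
        = g (fun j => if j ∈ l then x j else z j) := by
      intro l
      induction l with
      | nil => intro z; simp
      | cons j l ih =>
        intro z
        rw [List.map_cons, List.prod_cons, Module.End.mul_apply, LinearMap.sum_apply, Finset.sum_apply]
        simp only [TT_apply]
        rw [hsum j (fun r => ((l.map fun j => ∑ k ∈ Finset.range (N+1), TT N (c j k) (y j) j).prod g) (Function.update z j r))]
        rw [ih]
        congr 1
        funext m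
        by_cases hm : m ∈ l
        · simp [hm]
        · by_cases hmj : m = j
          · subst hmj; simp
          · simp [hm, hmj]
    rw [this]; simp
  rw [hexp f, hexp f0, ← Finset.sum_sub_distrib]
  refine (Finset.abs_sum_le_sum_abs _ _).trans ?_
  rw [← Finset.sum_filter_add_sum_filter_not _ Λ]
  rw [Finset.sum_eq_zero, zero_add]
  · apply Finset.sum_le_sum
    intro α hα
    rw [Finset.mem_filter, Fintype.mem_piFinset] at hα
    have hα' : ∀ j, α j ≤ N := fun j => by have := hα.1 j; simp at this; omega
    have b1 := TL_bound N c y α u hα' hbd (List.finRange s) (List.nodup_finRange s) f B hf x hx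
    have b2 := TL_bound N c y α u hα' hbd (List.finRange s) (List.nodup_finRange s) f0 B hf0 x hx
    rw [← List.ofFn_eq_map, List.prod_ofFn] at b1 b2
    refine (abs_sub _ _).trans ?_
    linarith
  · intro α hα
    rw [Finset.mem_filter] at hα
    have : TL N c y α (List.finRange s) f x = TL N c y α (List.finRange s) f0 x := by
      apply TL_agree
      · intro w hw _
        have hw' : ∀ j, ∃ i ≤ α j, w j = y j i := fun j => by
          obtain ⟨i, a, _, b⟩ := hw j (by simp); exact ⟨i, a, b⟩
        choose β hβ1 hβ2 using hw'
        have : w = fun j => t (β j) := by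
          funext j
          rw [hβ2 j, hy1 j _ ((hβ1 j).trans_lt (hN α hα.2 j))]
        rw [this]
        exact hag β (hlow α β hβ1 hα.2)
      · intro j _ i hi
        exact hzero j (α j) (hN α hα.2 j) i hi
    rw [this]; simp

lemma minErr_le {s n : ℕ} (u : Fin s → ℝ) (hu : ∀ j, 0 < u j) (N : ℕ)
    (Λ : (Fin s → ℕ) → Prop) [DecidablePred Λ]
    (hlow : ∀ α β : Fin s → ℕ, β ≤ α → Λ α → Λ β) (hN : ∀ α, Λ α → ∀ j, α j < N)
    (hcard : ((Fintype.piFinset fun _ : Fin s => Finset.range N).filter Λ).card ≤ n) (R : ℝ)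
    (hR : ∑ α ∈ (Fintype.piFinset fun _ : Fin s => Finset.range (N+1)).filter (fun α => ¬ Λ α),
      2 * (∏ j, (1 + u j)) * ∏ j, (u j ^ α j / (α j).factorial) ≤ R) :
    minErr n s {f | MemS u f} (normS u) ≤ ENNReal.ofReal R := by
  classical
  set t : ℕ → ℝ := fun i => 1 / ((i : ℝ) + 2) with ht
  have htinj : Function.Injective t := by
    intro a b h
    simp only [ht, one_div, _root_.inv_inj, add_left_inj, Nat.cast_inj] at h
    exact h
  have ht1 : ∀ i, t i ∈ Set.Ico (0:ℝ) 1 := by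
    intro i
    have : (0:ℝ) ≤ i := Nat.cast_nonneg i
    refine ⟨by simp only [ht]; positivity, ?_⟩
    simp only [ht]
    rw [div_lt_one (by positivity)]; linarith
  set G := (Fintype.piFinset fun _ : Fin s => Finset.range N).filter Λ with hG
  let pt : Fin n → Fin s → ℝ := fun i j => t ((G.toList.getD i 0) j)
  have hpt : ∀ i, pt i ∈ unitCube s := fun i j _ => ht1 _
  let φ : (Fin n → ℝ) → ℝ := fun v =>
    if h : ∃ f : (Fin s → ℝ) → ℝ, (MemS u f ∧ normS u f ≤ 1) ∧ (fun i => f (pt i)) = v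
    then intBox s h.choose else 0
  unfold minErr
  refine iInf_le_of_le pt (iInf_le_of_le hpt (iInf_le_of_le φ ?_))
  unfold worstErr
  refine iSup_le fun f => iSup_le fun hf => iSup_le fun hn => ?_
  apply ENNReal.ofReal_le_ofReal
  have hex : ∃ f0 : (Fin s → ℝ) → ℝ, (MemS u f0 ∧ normS u f0 ≤ 1) ∧ (fun i => f0 (pt i)) = fun i => f (pt i) :=
    ⟨f, ⟨hf, hn⟩, rfl⟩
  have hφ : φ (fun i => f (pt i)) = intBox s hex.choose := dif_pos hex
  beta_reduce
  rw [hφ]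
  obtain ⟨⟨hf0, hn0⟩, hag⟩ := hex.choose_spec
  set f0 := hex.choose
  have hcl := cls_of_norm u hu f hf hn
  have hcl0 := cls_of_norm u hu f0 hf0 hn0
  have hb : ∀ x ∈ unitCube s, ‖f x - f0 x‖ ≤ R := by
    intro x hx
    refine (ptwise u N t htinj ht1 Λ hlow hN f f0 _ hcl hcl0 ?_ x hx).trans hR
    intro β hβ
    have hβG : β ∈ G.toList := by
      rw [Finset.mem_toList, hG, Finset.mem_filter, Fintype.mem_piFinset]
      exact ⟨fun j => by simpa using hN β hβ j, hβ⟩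
    obtain ⟨i, hi, hiβ⟩ := List.getElem_of_mem hβG
    have hin : i < n := by rw [Finset.length_toList] at hi; omega
    have e := congrFun hag ⟨i, hin⟩
    have e2 : pt ⟨i, hin⟩ = fun j => t (β j) := by
      funext j
      simp only [pt]
      rw [List.getD_eq_getElem _ _ hi, hiβ]
    simp only [e2] at e
    exact e.symm
  unfold intBox
  rw [← integral_sub (integrableOn_cube f hcl.1.continuous) (integrableOn_cube f0 hcl0.1.continuous)]
  have hm : MeasurableSet (unitCube s) := MeasurableSet.univ_pi fun _ => measurableSet_Ico
  have := norm_setIntegral_le_of_norm_le_const (μ := volume) (s := unitCube s) (f := fun x => f x - f0 x) (C := R)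
    (by rw [vol_cube]; simp) hb
  simpa [Measure.real, vol_cube] using this

lemma exp_sub_one_ge (x r : ℝ) (hx : 0 ≤ x) (hr : 1 ≤ r) : (x / r) ^ r ≤ Real.exp x - 1 := by
  have hr0 : 0 < r := by linarith
  have h1 : (1:ℝ) ^ r + (x/r) ^ r ≤ (1 + x/r) ^ r :=
    Real.add_rpow_le_rpow_add zero_le_one (by positivity) hr
  have h2 : (1 + x/r) ^ r ≤ (Real.exp (x/r)) ^ r := by
    apply Real.rpow_le_rpow (by positivity) _ hr0.le
    linarith [Real.add_one_le_exp (x/r)]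
  rw [← Real.exp_mul, div_mul_cancel₀ _ hr0.ne'] at h2
  rw [Real.one_rpow] at h1
  linarith

lemma inv_exp_sub_one (x r : ℝ) (hx : 0 < x) (hr : 1 ≤ r) : (Real.exp x - 1)⁻¹ ≤ (r / x) ^ r := by
  have hr0 : 0 < r := by linarith
  have h := exp_sub_one_ge x r hx.le hr
  have h0 : 0 < (x / r) ^ r := by positivity
  calc (Real.exp x - 1)⁻¹ ≤ ((x / r) ^ r)⁻¹ := inv_anti₀ h0 h
    _ = (r / x) ^ r := by rw [← Real.inv_rpow (by positivity), inv_div]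

lemma geo (x r : ℝ) (hx : 0 < x) (hr : 1 ≤ r) (N : ℕ) :
    ∑ k ∈ Finset.range N, Real.exp (-(x * k)) ≤ Real.exp ((r / x) ^ r) := by
  have hx1 : Real.exp (-x) < 1 := by simpa using hx
  have e : ∀ k ∈ Finset.range N, Real.exp (-(x * k)) = Real.exp (-x) ^ k := by
    intro k _; rw [← Real.exp_nat_mul]; congr 1; ring
  rw [Finset.sum_congr rfl e]
  have h1 := Summable.sum_le_tsum (Finset.range N) (fun k _ => by positivity)
    (summable_geometric_of_lt_one (Real.exp_pos (-x)).le hx1)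
  rw [tsum_geometric_of_lt_one (Real.exp_pos (-x)).le hx1] at h1
  refine h1.trans ?_
  have hp : 0 < Real.exp x - 1 := by linarith [Real.add_one_le_exp x]
  have h2 : (1 - Real.exp (-x))⁻¹ = (Real.exp x - 1)⁻¹ + 1 := by
    rw [Real.exp_neg]
    have : Real.exp x ≠ 0 := (Real.exp_pos x).ne'
    have h3 : 1 - (Real.exp x)⁻¹ = (Real.exp x - 1) / Real.exp x := by field_simp
    rw [h3, inv_div]
    field_simp; ring
  rw [h2]
  exact (Real.add_one_le_exp _).trans (Real.exp_le_exp.2 (inv_exp_sub_one x r hx hr))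

lemma gprod (c q r : ℝ) (hc : 0 < c) (hr : 1 ≤ r) (hqr : 1 < q * r) :
    ∃ C1 : ℝ, 0 ≤ C1 ∧ ∀ ε > 0, ∀ s N : ℕ,
      ∏ j : Fin s, ∑ k ∈ Finset.range N, Real.exp (-(ε * (c * ((j : ℕ) + 1 : ℝ) ^ q) * k))
        ≤ Real.exp (C1 * ε ^ (-r)) := by
  have hS : Summable fun j : ℕ => ((j : ℝ) + 1) ^ (-(q * r)) := by
    have := (summable_nat_add_iff 1).2 (Real.summable_nat_rpow.2 (by linarith : -(q * r) < -1))
    simpa using this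
  have hr0 : 0 < r := by linarith
  refine ⟨(r / c) ^ r * ∑' j : ℕ, ((j : ℝ) + 1) ^ (-(q * r)), ?_, ?_⟩
  · exact mul_nonneg (by positivity) (tsum_nonneg fun j => by positivity)
  intro ε hε s N
  calc _ ≤ ∏ j : Fin s, Real.exp ((r / (ε * (c * ((j : ℕ) + 1 : ℝ) ^ q))) ^ r) := by
        apply Finset.prod_le_prod
        · intro j _; exact Finset.sum_nonneg fun k _ => (Real.exp_pos _).le
        · intro j _
          exact geo _ r (by positivity) hr N
    _ = Real.exp (∑ j : Fin s, (r / c) ^ r * ε ^ (-r) * ((j : ℕ) + 1 : ℝ) ^ (-(q * r))) := by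
        rw [← Real.exp_sum]
        congr 1
        apply Finset.sum_congr rfl
        intro j _
        have hj : (0:ℝ) < (j : ℕ) + 1 := by positivity
        have e : r / (ε * (c * ((j : ℕ) + 1 : ℝ) ^ q)) = (r / c) * ε⁻¹ * (((j : ℕ) + 1 : ℝ) ^ q)⁻¹ := by
          field_simp
        rw [e, Real.mul_rpow (by positivity) (by positivity), Real.mul_rpow (by positivity) (by positivity),
          Real.inv_rpow hε.le, ← Real.rpow_neg hε.le, ← Real.rpow_neg hj.le, ← Real.rpow_mul hj.le]
        congr 2; ring
    _ ≤ _ := by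
        apply Real.exp_le_exp.2
        rw [← Finset.mul_sum, Fin.sum_univ_eq_sum_range (fun j => ((j : ℝ) + 1) ^ (-(q * r))) s]
        have := hS.sum_le_tsum (Finset.range s) (fun j _ => by positivity)
        have h0 : 0 ≤ (r / c) ^ r * ε ^ (-r) := by positivity
        calc _ ≤ (r / c) ^ r * ε ^ (-r) * ∑' j : ℕ, ((j : ℝ) + 1) ^ (-(q * r)) := by gcongr
          _ = _ := by ring

lemma prod_exp_sum {s : ℕ} (a : Fin s → ℝ) (N : ℕ) (ε : ℝ) :
    ∑ α ∈ Fintype.piFinset (fun _ : Fin s => Finset.range N), Real.exp (-(ε * ∑ j, a j * α j))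
      = ∏ j, ∑ k ∈ Finset.range N, Real.exp (-(ε * a j * k)) := by
  rw [Finset.prod_univ_sum]
  apply Finset.sum_congr rfl
  intro α _
  rw [← Real.exp_sum, Finset.mul_sum, ← Finset.sum_neg_distrib]
  congr 1; apply Finset.sum_congr rfl; intros; ring

lemma consts (u : ℕ → ℝ) (hu : ∀ j, 0 < u j) (c q r : ℝ) (hc : 0 < c) (hr : 1 ≤ r) (hqr : 1 < q * r)
    (hdecay : ∀ᶠ j : ℕ in Filter.atTop, c * ((j : ℝ) + 1) ^ q ≤ Real.log (u j)⁻¹) :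
    ∃ K D : ℝ, 0 < K ∧ 0 < D ∧ (∀ s : ℕ, ∏ j : Fin s, (1 + u j) ≤ K) ∧
      ∀ s : ℕ, ∀ α : Fin s → ℕ, ∏ j : Fin s, (u j ^ α j / (α j).factorial) ≤
        D * Real.exp (-∑ j : Fin s, (c * ((j : ℕ) + 1 : ℝ) ^ q) * α j) := by
  have hr0 : 0 < r := by linarith
  obtain ⟨j0, hj0⟩ := Filter.eventually_atTop.1 hdecay
  have hle : ∀ j ≥ j0, u j ≤ Real.exp (-(c * ((j : ℝ) + 1) ^ q)) := by
    intro j hj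
    have := hj0 j hj
    rw [Real.log_inv] at this
    rw [← Real.log_le_iff_le_exp (hu j)]; linarith
  have hS : Summable u := by
    have h1 : Summable fun j : ℕ => (r / c) ^ r * ((j : ℝ) + 1) ^ (-(q * r)) := by
      have := (summable_nat_add_iff 1).2 (Real.summable_nat_rpow.2 (by linarith : -(q * r) < -1))
      apply Summable.mul_left
      simpa using this
    refine h1.of_norm_bounded_eventually_nat ?_
    filter_upwards [Filter.eventually_ge_atTop j0] with j hj
    rw [Real.norm_of_nonneg (hu j).le]
    refine (hle j hj).trans ?_
    have hj : (0:ℝ) < (j : ℝ) + 1 := by positivity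
    set x := c * ((j : ℝ) + 1) ^ q with hx
    have hx0 : 0 < x := by positivity
    have h2 : Real.exp (-x) ≤ (Real.exp x - 1)⁻¹ := by
      rw [Real.exp_neg]
      exact inv_anti₀ (by linarith [Real.add_one_le_exp x]) (by linarith)
    refine (h2.trans (inv_exp_sub_one x r hx0 hr)).trans (le_of_eq ?_)
    have e : r / x = (r / c) * (((j : ℝ) + 1) ^ q)⁻¹ := by rw [hx]; field_simp
    rw [e, Real.mul_rpow (by positivity) (by positivity), ← Real.rpow_neg hj.le, ← Real.rpow_mul hj.le]
    congr 2; ring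
  let d : ℕ → ℝ := fun j => if j < j0 then u j * Real.exp (c * ((j : ℝ) + 1) ^ q) else 0
  have hd0 : ∀ j, 0 ≤ d j := by
    intro j; simp only [d]; split_ifs
    · have := hu j; positivity
    · exact le_rfl
  have hdS : Summable d := by
    apply summable_of_ne_finset_zero (s := Finset.range j0)
    intro j hj; simp at hj; simp [d, hj]
  have hd : ∀ j k : ℕ, u j ^ k / k.factorial ≤ Real.exp (d j) * Real.exp (-(c * ((j : ℝ) + 1) ^ q * k)) := by
    intro j k
    set x := c * ((j : ℝ) + 1) ^ q with hx
    have e : Real.exp (-(x * k)) = (Real.exp (-x)) ^ k := by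
      rw [← Real.exp_nat_mul]; congr 1; ring
    by_cases hj : j < j0
    · have h1 := Real.pow_div_factorial_le_exp (u j * Real.exp x) (by have := hu j; positivity) k
      have h2 : u j ^ k / k.factorial = (u j * Real.exp x) ^ k / k.factorial * Real.exp (-x) ^ k := by
        rw [mul_pow, Real.exp_neg, inv_pow]
        have : Real.exp x ≠ 0 := (Real.exp_pos x).ne'
        field_simp
      rw [h2, e]
      have : d j = u j * Real.exp x := by simp [d, hj, hx]
      rw [this]
      gcongr
    · have : d j = 0 := by simp [d, hj]
      rw [this, Real.exp_zero, one_mul, e]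
      have h1 : u j ^ k ≤ Real.exp (-x) ^ k := pow_le_pow_left₀ (hu j).le (hle j (by omega)) k
      refine (div_le_self (pow_pos (hu j) k).le ?_).trans h1
      exact_mod_cast Nat.one_le_iff_ne_zero.2 (Nat.factorial_ne_zero k)
  refine ⟨Real.exp (∑' j, u j), Real.exp (∑' j, d j), Real.exp_pos _, Real.exp_pos _, ?_, ?_⟩
  · intro s
    calc ∏ j : Fin s, (1 + u j) ≤ ∏ j : Fin s, Real.exp (u j) := by
          apply Finset.prod_le_prod
          · intro j _; have := hu j; positivity
          · intro j _; linarith [Real.add_one_le_exp (u j)]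
      _ = Real.exp (∑ j : Fin s, u j) := (Real.exp_sum _ _).symm
      _ ≤ _ := by
          apply Real.exp_le_exp.2
          rw [Fin.sum_univ_eq_sum_range u s]
          exact hS.sum_le_tsum _ (fun j _ => (hu j).le)
  · intro s α
    calc ∏ j : Fin s, (u j ^ α j / (α j).factorial)
        ≤ ∏ j : Fin s, (Real.exp (d j) * Real.exp (-(c * ((j : ℕ) + 1 : ℝ) ^ q * α j))) := by
          apply Finset.prod_le_prod
          · intro j _; have := hu j; positivity
          · intro j _; exact hd j (α j)
      _ = Real.exp (∑ j : Fin s, d j) * Real.exp (-∑ j : Fin s, (c * ((j : ℕ) + 1 : ℝ) ^ q) * α j) := by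
          rw [Finset.prod_mul_distrib, ← Real.exp_sum, ← Real.exp_sum, Finset.sum_neg_distrib]
      _ ≤ _ := by
          gcongr
          rw [Fin.sum_univ_eq_sum_range d s]
          exact hdS.sum_le_tsum _ (fun j _ => hd0 j)

/-- if `liminf_j log(u_j⁻¹)/j^{(p-1)/(2-p)} > 0` (expressed as: eventually
`log(u_j⁻¹) ≥ c·j^{(p-1)/(2-p)}` for some `c > 0`), then dimension-independent
super-polynomial convergence holds for `S_{s,u}`.
(The sequence `u` is indexed from `0`, i.e. `u (j-1)` is the paper's `u_j`.) -/
theorem statement4 (u : ℕ → ℝ) (hu : ∀ j, 0 < u j) (hmono : Antitone u)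
    (p : ℝ) (hp1 : 1 < p) (hp2 : p < 2)
    (hdecay : ∃ c : ℝ, 0 < c ∧ ∀ᶠ j : ℕ in Filter.atTop,
      c * ((j : ℝ) + 1) ^ ((p - 1) / (2 - p)) ≤ Real.log (u j)⁻¹) :
    ∃ C c : ℝ, 0 < C ∧ 0 < c ∧
      ∀ s n : ℕ, 0 < s → 0 < n →
        minErr n s {f | MemS (fun j : Fin s => u j) f} (normS (fun j : Fin s => u j)) ≤
          ENNReal.ofReal (C * Real.exp (-c * (Real.log n) ^ p)) := by
  obtain ⟨c, hc, hdec⟩ := hdecay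
  set q := (p - 1) / (2 - p) with hq
  set r := 1 / (p - 1) with hr
  have hp0 : 0 < p - 1 := by linarith
  have hp2' : 0 < 2 - p := by linarith
  have hr1 : 1 ≤ r := by rw [hr, le_div_iff₀ hp0]; linarith
  have hqr : 1 < q * r := by
    have : q * r = 1 / (2 - p) := by rw [hq, hr]; field_simp
    rw [this, lt_div_iff₀ hp2']; linarith
  have hq0 : 0 < q := by rw [hq]; positivity
  obtain ⟨C1, hC1, hG⟩ := gprod c q r hc hr1 hqr
  obtain ⟨K, D, hK, hD, hKs, hDs⟩ := consts u hu c q r hc hr1 hqr hdec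
  have main : ∀ (s n : ℕ) (M : ℝ),
      (∀ N : ℕ, (((Fintype.piFinset fun _ : Fin s => Finset.range N).filter
        (fun α => ∑ j : Fin s, (c * ((j : ℕ) + 1 : ℝ) ^ q) * α j ≤ M)).card : ℝ) ≤ n) →
      minErr n s {f | MemS (fun j : Fin s => u j) f} (normS (fun j : Fin s => u j)) ≤
        ENNReal.ofReal (2 * K * D * Real.exp (C1 * (1/2 : ℝ) ^ (-r)) * Real.exp (-(M / 2))) := by
    intro s n M hcard
    have ha : ∀ j : Fin s, c ≤ c * ((j : ℕ) + 1 : ℝ) ^ q := by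
      intro j
      have : (1:ℝ) ≤ ((j : ℕ) + 1 : ℝ) ^ q := Real.one_le_rpow (by simp) hq0.le
      nlinarith
    apply minErr_le (fun j : Fin s => u j) (fun j => hu j) (⌊M / c⌋₊ + 1)
      (fun α => ∑ j : Fin s, (c * ((j : ℕ) + 1 : ℝ) ^ q) * α j ≤ M)
    · intro α β hβ hα
      refine le_trans ?_ hα
      apply Finset.sum_le_sum
      intro j _
      have := hβ j
      gcongr
    · intro α hα j
      have h1 : (c * ((j : ℕ) + 1 : ℝ) ^ q) * α j ≤ M :=
        le_trans (Finset.single_le_sum (f := fun j : Fin s => (c * ((j : ℕ) + 1 : ℝ) ^ q) * (α j : ℝ))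
          (fun i _ => by positivity) (Finset.mem_univ j)) hα
      have h2 : c * α j ≤ M := le_trans (by gcongr; exact ha j) h1
      have h3 : (α j : ℝ) ≤ M / c := by rw [le_div_iff₀ hc]; linarith
      have := Nat.le_floor h3
      omega
    · exact_mod_cast hcard (⌊M / c⌋₊ + 1)
    · set N := ⌊M / c⌋₊ + 1
      have hpt : ∀ α ∈ (Fintype.piFinset fun _ : Fin s => Finset.range (N+1)).filter
          (fun α => ¬ (∑ j : Fin s, (c * ((j : ℕ) + 1 : ℝ) ^ q) * α j ≤ M)),
          2 * (∏ j : Fin s, (1 + u j)) * ∏ j : Fin s, (u j ^ α j / (α j).factorial) ≤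
            2 * K * D * Real.exp (-(M/2)) *
              Real.exp (-((1/2) * ∑ j : Fin s, (c * ((j : ℕ) + 1 : ℝ) ^ q) * α j)) := by
        intro α hα
        have hα := (Finset.mem_filter.1 hα).2
        push Not at hα
        have h1 := hDs s α
        have h2 := hKs s
        have h3 : 0 ≤ ∏ j : Fin s, (u j ^ α j / (α j).factorial) :=
          Finset.prod_nonneg fun j _ => by have := hu j; positivity
        calc _ ≤ 2 * K * (D * Real.exp (-∑ j : Fin s, (c * ((j : ℕ) + 1 : ℝ) ^ q) * α j)) := by gcongr
          _ ≤ 2 * K * (D * (Real.exp (-(M/2)) * Real.exp (-((1/2) * ∑ j : Fin s, (c * ((j : ℕ) + 1 : ℝ) ^ q) * α j)))) := by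
              rw [← Real.exp_add]
              gcongr
              linarith
          _ = _ := by ring
      refine (Finset.sum_le_sum hpt).trans ?_
      refine (Finset.sum_le_sum_of_subset_of_nonneg (Finset.filter_subset _ _)
        (fun α _ _ => by positivity)).trans ?_
      rw [← Finset.mul_sum, prod_exp_sum (fun j : Fin s => c * ((j : ℕ) + 1 : ℝ) ^ q)]
      have := hG (1/2) (by norm_num) s (N+1)
      calc _ ≤ 2 * K * D * Real.exp (-(M/2)) * Real.exp (C1 * (1/2 : ℝ) ^ (-r)) := by gcongr
        _ = _ := by ring
  refine ⟨2 * K * D * Real.exp (C1 * (1/2 : ℝ) ^ (-r)) * Real.exp (1/2), (1/2) * ((1 + C1)⁻¹) ^ p,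
    by positivity, by positivity, ?_⟩
  intro s n _ hn
  rcases Nat.lt_or_ge 1 n with hn1 | hn1
  · have hlog : 0 < Real.log n := Real.log_pos (by exact_mod_cast hn1)
    set l := Real.log n * (1 + C1)⁻¹ with hl
    have hl0 : 0 < l := by positivity
    refine (main s n (l ^ p) ?_).trans ?_
    · intro N
      set ε := l ^ (1 - p) with hε
      have hε0 : 0 < ε := by positivity
      have e1 : ε * l ^ p = l := by rw [hε, ← Real.rpow_add hl0]; simp
      have e2 : ε ^ (-r) = l := by
        rw [hε, ← Real.rpow_mul hl0.le]
        have : (1 - p) * -r = 1 := by rw [hr]; field_simp; ring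
        rw [this, Real.rpow_one]
      rw [Finset.card_eq_sum_ones, Nat.cast_sum]
      calc _ ≤ ∑ α ∈ (Fintype.piFinset fun _ : Fin s => Finset.range N).filter
              (fun α => ∑ j : Fin s, (c * ((j : ℕ) + 1 : ℝ) ^ q) * α j ≤ l ^ p),
              Real.exp l * Real.exp (-(ε * ∑ j : Fin s, (c * ((j : ℕ) + 1 : ℝ) ^ q) * α j)) := by
            apply Finset.sum_le_sum
            intro α hα
            have hα := (Finset.mem_filter.1 hα).2
            rw [← Real.exp_add, Nat.cast_one]
            apply Real.one_le_exp
            have := mul_le_mul_of_nonneg_left hα hε0.le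
            linarith
        _ ≤ ∑ α ∈ (Fintype.piFinset fun _ : Fin s => Finset.range N),
              Real.exp l * Real.exp (-(ε * ∑ j : Fin s, (c * ((j : ℕ) + 1 : ℝ) ^ q) * α j)) :=
            Finset.sum_le_sum_of_subset_of_nonneg (Finset.filter_subset _ _)
              (fun α _ _ => by positivity)
        _ ≤ Real.exp l * Real.exp (C1 * l) := by
            rw [← Finset.mul_sum, prod_exp_sum (fun j : Fin s => c * ((j : ℕ) + 1 : ℝ) ^ q)]
            have := hG ε hε0 s N
            rw [e2] at this
            gcongr
        _ = n := by
            rw [← Real.exp_add]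
            have : l + C1 * l = Real.log n := by rw [hl]; field_simp
            rw [this, Real.exp_log (by exact_mod_cast hn)]
    · apply ENNReal.ofReal_le_ofReal
      have h1 : Real.exp (-(l ^ p / 2)) = Real.exp (-(1 / 2 * (1 + C1)⁻¹ ^ p) * Real.log n ^ p) := by
        congr 1
        rw [hl, Real.mul_rpow hlog.le (by positivity)]; ring
      rw [h1]
      have h2 : 1 ≤ Real.exp (1/2 : ℝ) := Real.one_le_exp (by norm_num)
      refine mul_le_mul_of_nonneg_right ?_ (Real.exp_pos _).le
      exact le_mul_of_one_le_right (by positivity) h2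
  · have hn' : n = 1 := by omega
    subst hn'
    refine (main s 1 (-1) ?_).trans ?_
    · intro N
      rw [Finset.filter_false_of_mem]
      · simp
      · intro α _
        have : 0 ≤ ∑ j : Fin s, (c * ((j : ℕ) + 1 : ℝ) ^ q) * α j :=
          Finset.sum_nonneg fun j _ => by positivity
        linarith
    · apply ENNReal.ofReal_le_ofReal
      rw [Nat.cast_one, Real.log_one, Real.zero_rpow (by linarith)]
      norm_num

end
end

section
/- Let b ≥ 2 be an integer, s ∈ ℕ, d ∈ ℕ, and let a = (a_j)_{j≥1} be a nondecreasing sequence of real weights with a_j ≥ 0 for all j. Then for every n < b^{s·d} one has e(n, s, W_{s,a}) ≥ b^{−∑_{j=1}^s ( d²/2 + (a_j + 1/2)·d )}. -/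
open MeasureTheory Matrix Filter
open scoped ENNReal BigOperators Topology

noncomputable section

def omg (b : ℕ) : ℂ := Complex.exp (2 * Real.pi * Complex.I / (b : ℂ))

lemma omg_prim (b : ℕ) (hb : 2 ≤ b) : IsPrimitiveRoot (omg b) b :=
  Complex.isPrimitiveRoot_exp b (by omega)

lemma norm_omg (b : ℕ) (hb : 2 ≤ b) : ‖omg b‖ = 1 :=
  (omg_prim b hb).norm'_eq_one (by omega)

lemma wal1_eq (b k : ℕ) (x : ℝ) :
    wal1 b k x = omg b ^ (∑ i ∈ Finset.range k, natDigit b k i * realDigit b x i) := by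
  rw [wal1, omg, ← Complex.exp_nat_mul, mul_comm]

lemma norm_wal1 (b k : ℕ) (hb : 2 ≤ b) (x : ℝ) : ‖wal1 b k x‖ = 1 := by
  rw [wal1_eq, norm_pow, norm_omg b hb, one_pow]

lemma natDigit_zero {b k i : ℕ} (h : k < b ^ i) : natDigit b k i = 0 := by
  simp [natDigit, Nat.div_eq_of_lt h]

lemma sum_digits {M : Type*} [AddCommMonoid M] {b k R : ℕ} (hb : 2 ≤ b) (hk : k < b ^ R)
    (g : ℕ → M) (hg : ∀ i, natDigit b k i = 0 → g i = 0) :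
    ∑ i ∈ Finset.range k, g i = ∑ i ∈ Finset.range R, g i := by
  have h1 : ∑ i ∈ Finset.range k, g i = ∑ i ∈ Finset.range (max k R), g i := by
    apply Finset.sum_subset
    · intro i; simp; omega
    · intro i _ hi
      simp only [Finset.mem_range, not_lt] at hi
      exact hg i (natDigit_zero (lt_of_le_of_lt hi (Nat.lt_pow_self (by omega))))
  have h2 : ∑ i ∈ Finset.range R, g i = ∑ i ∈ Finset.range (max k R), g i := by
    apply Finset.sum_subset
    · intro i; simp; omega
    · intro i _ hi
      simp only [Finset.mem_range, not_lt] at hi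
      exact hg i (natDigit_zero (lt_of_lt_of_le hk (Nat.pow_le_pow_right (by omega) hi)))
  rw [h1, h2]

lemma wal1_eq' {b k R : ℕ} (hb : 2 ≤ b) (hk : k < b ^ R) (x : ℝ) :
    wal1 b k x = omg b ^ (∑ i ∈ Finset.range R, natDigit b k i * realDigit b x i) := by
  rw [wal1_eq, sum_digits hb hk]
  intro i hi; simp [hi]

lemma natDigit_add {b k d t i : ℕ} (hb : 2 ≤ b) (hi : i < d) :
    natDigit b (k + b ^ d * t) i = natDigit b k i := by
  obtain ⟨e, rfl⟩ : ∃ e, d = i + 1 + e := ⟨d - (i+1), by omega⟩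
  have : b ^ (i + 1 + e) * t = b ^ i * (b * (b ^ e * t)) := by ring
  rw [natDigit, natDigit, this, Nat.add_mul_div_left _ _ (by positivity), Nat.add_mul_mod_self_left]

lemma natDigit_top {b k d t : ℕ} (hb : 2 ≤ b) (hk : k < b ^ d) (ht : t < b) :
    natDigit b (k + b ^ d * t) d = t := by
  rw [natDigit, Nat.add_mul_div_left _ _ (by positivity), Nat.div_eq_of_lt hk, zero_add,
    Nat.mod_eq_of_lt ht]

lemma wal1_split {b k d t : ℕ} (hb : 2 ≤ b) (hk : k < b ^ d) (ht : t < b) (x : ℝ) :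
    wal1 b (k + b ^ d * t) x = wal1 b k x * omg b ^ (t * realDigit b x d) := by
  have hlt : k + b ^ d * t < b ^ (d + 1) := by
    rw [pow_succ]; nlinarith
  rw [wal1_eq' hb hlt, wal1_eq' hb hk, Finset.sum_range_succ, natDigit_top hb hk ht, pow_add]
  congr 2
  apply Finset.sum_congr rfl
  intro i hi
  rw [natDigit_add hb (Finset.mem_range.1 hi)]

lemma sum_range_mul' {M : Type*} [AddCommMonoid M] (N c : ℕ) (f : ℕ → M) :
    ∑ k ∈ Finset.range (N * c), f k = ∑ t ∈ Finset.range c, ∑ k ∈ Finset.range N, f (k + N * t) := by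
  induction c with
  | zero => simp
  | succ c ih =>
    rw [Nat.mul_succ, Finset.sum_range_add, ih, Finset.sum_range_succ]
    congr 1
    apply Finset.sum_congr rfl
    intro i _
    rw [add_comm]

lemma realDigit_lt {b : ℕ} (hb : 2 ≤ b) (x : ℝ) (i : ℕ) : realDigit b x i < b := by
  unfold realDigit
  have := Int.emod_lt_of_pos ⌊x * (b : ℝ) ^ (i + 1)⌋ (show (0:ℤ) < b by omega)
  have := Int.emod_nonneg ⌊x * (b : ℝ) ^ (i + 1)⌋ (show (b:ℤ) ≠ 0 by omega)
  omega

lemma floor_succ {b : ℕ} (hb : 2 ≤ b) (x : ℝ) (i : ℕ) :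
    ⌊x * (b : ℝ) ^ (i + 1)⌋ / (b : ℤ) = ⌊x * (b : ℝ) ^ i⌋ := by
  rw [pow_succ, ← mul_assoc]
  exact Int.mul_natCast_floor_div_cancel (by omega) _

lemma floor_succ' {b : ℕ} (hb : 2 ≤ b) (x : ℝ) (i : ℕ) :
    ⌊x * (b : ℝ) ^ (i + 1)⌋ = b * ⌊x * (b : ℝ) ^ i⌋ + realDigit b x i := by
  rw [← floor_succ hb x i, realDigit, Int.toNat_of_nonneg (Int.emod_nonneg _ (by omega))]
  exact (Int.mul_ediv_add_emod _ _).symm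

lemma floor_eq_iff {b : ℕ} (hb : 2 ≤ b) (x y : ℝ) (h0 : ⌊x⌋ = ⌊y⌋) (d : ℕ) :
    (∀ i < d, realDigit b x i = realDigit b y i) ↔ ⌊x * (b : ℝ) ^ d⌋ = ⌊y * (b : ℝ) ^ d⌋ := by
  induction d with
  | zero => simpa using h0
  | succ d ih =>
    constructor
    · intro h
      rw [floor_succ' hb, floor_succ' hb, ih.1 (fun i hi => h i (by omega)), h d (by omega)]
    · intro h i hi
      rcases Nat.lt_succ_iff_lt_or_eq.1 hi with hi | rfl
      · refine ih.2 ?_ i hi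
        rw [← floor_succ hb x d, ← floor_succ hb y d, h]
      · rw [realDigit, realDigit, h]

lemma digits_eq {b : ℕ} (hb : 2 ≤ b) (x y : ℝ) (d : ℕ)
    (h : ⌊x * (b : ℝ) ^ d⌋ = ⌊y * (b : ℝ) ^ d⌋) : ∀ i < d, realDigit b x i = realDigit b y i := by
  induction d with
  | zero => simp
  | succ d ih =>
      intro i hi
      rcases Nat.lt_succ_iff_lt_or_eq.1 hi with hi | rfl
      · refine ih ?_ i hi
        rw [← floor_succ hb x d, ← floor_succ hb y d, h]
      · rw [realDigit, realDigit, h]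

lemma wal1_congr {b k d : ℕ} (hb : 2 ≤ b) (hk : k < b ^ d) (x y : ℝ)
    (h : ⌊x * (b : ℝ) ^ d⌋ = ⌊y * (b : ℝ) ^ d⌋) : wal1 b k x = wal1 b k y := by
  rw [wal1_eq' hb hk, wal1_eq' hb hk]
  congr 1
  apply Finset.sum_congr rfl
  intro i hi
  rw [digits_eq hb x y d h i (Finset.mem_range.1 hi)]

lemma char_sum {b : ℕ} (hb : 2 ≤ b) (p q : ℕ) (hp : p < b) (hq : q < b) :
    ∑ t ∈ Finset.range b, omg b ^ (t * p) * (starRingEnd ℂ) (omg b ^ (t * q)) =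
      if p = q then (b : ℂ) else 0 := by
  have h := omg_prim b hb
  have hc : (starRingEnd ℂ) (omg b) = (omg b)⁻¹ := (Complex.inv_eq_conj (norm_omg b hb)).symm
  have h0 : omg b ≠ 0 := h.ne_zero (by omega)
  set z := omg b ^ p * (omg b ^ q)⁻¹ with hz
  have e : ∀ t, omg b ^ (t * p) * (starRingEnd ℂ) (omg b ^ (t * q)) = z ^ t := by
    intro t
    rw [map_pow, hc, hz, mul_pow, ← pow_mul, inv_pow, inv_pow, ← pow_mul, mul_comm t p, mul_comm t q]
  simp_rw [e]
  split_ifs with hpq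
  · have : z = 1 := by rw [hz, hpq, mul_inv_cancel₀ (pow_ne_zero _ h0)]
    simp [this]
  · have hz1 : z ≠ 1 := by
      intro hz1
      apply hpq
      apply h.pow_inj hp hq
      rw [hz] at hz1
      exact (mul_inv_eq_one₀ (pow_ne_zero _ h0)).1 hz1
    have hzb : z ^ b = 1 := by
      rw [hz, mul_pow, inv_pow, ← pow_mul, ← pow_mul, mul_comm p, mul_comm q, pow_mul, pow_mul,
        h.pow_eq_one]; simp
    rw [geom_sum_eq hz1, hzb]; simp

lemma dirichlet {b : ℕ} (hb : 2 ≤ b) (x y : ℝ) (d : ℕ) :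
    ∑ k ∈ Finset.range (b ^ d), wal1 b k x * (starRingEnd ℂ) (wal1 b k y) =
      if (∀ i < d, realDigit b x i = realDigit b y i) then (b : ℂ) ^ d else 0 := by
  induction d with
  | zero => simp [wal1]
  | succ d ih =>
    rw [pow_succ, sum_range_mul']
    have : ∀ t ∈ Finset.range b, ∑ k ∈ Finset.range (b ^ d),
        wal1 b (k + b ^ d * t) x * (starRingEnd ℂ) (wal1 b (k + b ^ d * t) y) =
        (omg b ^ (t * realDigit b x d) * (starRingEnd ℂ) (omg b ^ (t * realDigit b y d))) *
          ∑ k ∈ Finset.range (b ^ d), wal1 b k x * (starRingEnd ℂ) (wal1 b k y) := by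
      intro t ht
      rw [Finset.mul_sum]
      apply Finset.sum_congr rfl
      intro k hk
      rw [wal1_split hb (Finset.mem_range.1 hk) (Finset.mem_range.1 ht),
        wal1_split hb (Finset.mem_range.1 hk) (Finset.mem_range.1 ht), map_mul]
      ring
    rw [Finset.sum_congr rfl this, ← Finset.sum_mul, ih,
      char_sum hb _ _ (realDigit_lt hb x d) (realDigit_lt hb y d)]
    simp only [Nat.lt_succ_iff_lt_or_eq, or_imp, forall_and, forall_eq]
    by_cases h1 : realDigit b x d = realDigit b y d <;>
    by_cases h2 : ∀ i < d, realDigit b x i = realDigit b y i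
    · rw [if_pos h1, if_pos h2, if_pos ⟨h2, h1⟩, pow_succ, mul_comm]
    · rw [if_neg h2, mul_zero, if_neg (show ¬ (_ ∧ _) from fun h => h2 h.1)]
    · rw [if_neg h1, zero_mul, if_neg (show ¬ (_ ∧ _) from fun h => h1 h.2)]
    · rw [if_neg h1, zero_mul, if_neg (show ¬ (_ ∧ _) from fun h => h1 h.2)]

/-- the elementary interval -/
def cell (b d : ℕ) (q : ℤ) : Set ℝ := {x | ⌊x * (b : ℝ) ^ d⌋ = q}

lemma cell_eq {b : ℕ} (hb : 2 ≤ b) (d : ℕ) (q : ℤ) :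
    cell b d q = Set.Ico ((q : ℝ) / (b : ℝ) ^ d) ((q + 1) / (b : ℝ) ^ d) := by
  have : (0:ℝ) < (b : ℝ) ^ d := by positivity
  ext x
  simp only [cell, Set.mem_ofPred_eq, Int.floor_eq_iff, Set.mem_Ico, div_le_iff₀ this,
    lt_div_iff₀ this]

lemma cell_meas {b : ℕ} (hb : 2 ≤ b) (d : ℕ) (q : ℤ) : MeasurableSet (cell b d q) := by
  rw [cell_eq hb]; exact measurableSet_Ico

lemma cell_vol {b : ℕ} (hb : 2 ≤ b) (d : ℕ) (q : ℤ) :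
    volume.real (cell b d q) = ((b : ℝ) ^ d)⁻¹ := by
  have : (0:ℝ) < (b : ℝ) ^ d := by positivity
  rw [cell_eq hb, Real.volume_real_Ico_of_le (by gcongr; simp)]
  field_simp; ring

lemma cell_fin {b : ℕ} (hb : 2 ≤ b) (d : ℕ) (q : ℤ) : volume (cell b d q) ≠ ⊤ := by
  rw [cell_eq hb]; simp

lemma wal1_meas (b k : ℕ) : Measurable (wal1 b k) := by
  have : wal1 b k = fun x => omg b ^ (∑ i ∈ Finset.range k, natDigit b k i * realDigit b x i) :=
    funext (wal1_eq b k)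
  rw [this]
  have hr : ∀ i, Measurable fun x : ℝ => realDigit b x i := by
    intro i
    have h1 : Measurable fun x : ℝ => ⌊x * (b : ℝ) ^ (i + 1)⌋ :=
      Int.measurable_floor.comp (measurable_id.mul_const _)
    exact (measurable_from_top (f := fun z : ℤ => (z % (b : ℤ)).toNat)).comp h1
  exact (measurable_from_top (f := fun n : ℕ => omg b ^ n)).comp
    (Finset.measurable_fun_sum _ fun i _ => (hr i).const_mul _)

lemma wal1_int {b : ℕ} (hb : 2 ≤ b) (k d : ℕ) (q : ℤ) : IntegrableOn (wal1 b k) (cell b d q) := by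
  have : IsFiniteMeasure (volume.restrict (cell b d q)) := ⟨by
    simpa using (cell_fin hb d q).lt_top⟩
  exact Integrable.of_bound (wal1_meas b k).aestronglyMeasurable 1
    (Filter.Eventually.of_forall fun x => (norm_wal1 b k hb x).le)

lemma cell_union {b : ℕ} (hb : 2 ≤ b) (d : ℕ) (q : ℤ) :
    cell b d q = ⋃ t ∈ Finset.range b, cell b (d + 1) (b * q + (t : ℕ)) := by
  ext x
  simp only [cell, Set.mem_ofPred_eq, Finset.mem_range, Set.mem_iUnion, exists_prop]
  constructor
  · intro h
    exact ⟨realDigit b x d, realDigit_lt hb x d, by rw [floor_succ' hb, h]⟩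
  · rintro ⟨t, ht, h⟩
    rw [← floor_succ hb, h, Int.mul_add_ediv_left _ _ (by omega), Int.ediv_eq_zero_of_lt (by omega) (by omega), add_zero]

lemma int_cell_split {b : ℕ} (hb : 2 ≤ b) (k d : ℕ) (q : ℤ) :
    ∫ x in cell b d q, wal1 b k x =
      ∑ t ∈ Finset.range b, ∫ x in cell b (d + 1) (b * q + (t : ℕ)), wal1 b k x := by
  rw [cell_union hb, integral_biUnion_finset]
  · intro t _; exact cell_meas hb _ _
  · intro t _ t' _ h
    rw [Function.onFun, Set.disjoint_left]
    intro x hx hx'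
    simp only [cell, Set.mem_ofPred_eq] at hx hx'
    apply h
    have := hx.symm.trans hx'
    omega
  · intro t _; exact wal1_int hb _ _ _

lemma int_cell_lt {b k d : ℕ} (hb : 2 ≤ b) (hk : k < b ^ d) (q : ℤ) :
    ∫ x in cell b d q, wal1 b k x = ((b : ℂ) ^ d)⁻¹ * wal1 b k ((q : ℝ) / (b : ℝ) ^ d) := by
  rw [setIntegral_congr_fun (g := fun _ => wal1 b k ((q : ℝ) / (b : ℝ) ^ d)) (cell_meas hb d q)]
  · rw [setIntegral_const, cell_vol hb]; simp
  · intro x hx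
    apply wal1_congr hb hk
    have : (b : ℝ) ^ d ≠ 0 := by positivity
    rw [div_mul_cancel₀ _ this, Int.floor_intCast]
    exact hx

lemma int_cell_top {b k r : ℕ} (hb : 2 ≤ b) (h1 : b ^ r ≤ k) (h2 : k < b ^ (r + 1)) (q : ℤ) :
    ∫ x in cell b r q, wal1 b k x = 0 := by
  have hp : 0 < b ^ r := by positivity
  have ht : k / b ^ r < b := by
    apply Nat.div_lt_of_lt_mul; rwa [pow_succ] at h2
  have ht0 : 0 < k / b ^ r := Nat.div_pos h1 hp
  have hk : k = k % b ^ r + b ^ r * (k / b ^ r) := (Nat.mod_add_div _ _).symm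
  have hk' : k % b ^ r < b ^ r := Nat.mod_lt _ hp
  set t := k / b ^ r
  set k' := k % b ^ r
  rw [int_cell_split hb]
  have : ∀ t' ∈ Finset.range b, ∫ x in cell b (r + 1) (b * q + (t' : ℕ)), wal1 b k x =
      ((b : ℂ) ^ (r + 1))⁻¹ * wal1 b k' ((q : ℝ) / (b : ℝ) ^ r) *
        (omg b ^ (t' * t) * (starRingEnd ℂ) (omg b ^ (t' * 0))) := by
    intro t' ht'
    rw [Finset.mem_range] at ht'
    rw [setIntegral_congr_fun (g := fun _ => wal1 b k' ((q : ℝ) / (b : ℝ) ^ r) * omg b ^ (t' * t))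
      (cell_meas hb _ _)]
    · rw [setIntegral_const, cell_vol hb]; simp; ring
    · intro x hx
      have hx1 : ⌊x * (b : ℝ) ^ (r + 1)⌋ = b * q + (t' : ℕ) := hx
      have hq : ⌊x * (b : ℝ) ^ r⌋ = q := by
        have : x ∈ cell b r q := by
          rw [cell_union hb]
          simp only [Set.mem_iUnion]
          exact ⟨t', Finset.mem_range.2 ht', hx⟩
        exact this
      have hd : realDigit b x r = t' := by
        have := floor_succ' hb x r
        rw [hx1, hq] at this
        omega
      have e : wal1 b k' x = wal1 b k' ((q : ℝ) / (b : ℝ) ^ r) := by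
        apply wal1_congr hb hk'
        have : (b : ℝ) ^ r ≠ 0 := by positivity
        rw [div_mul_cancel₀ _ this, Int.floor_intCast]
        exact hq
      change wal1 b k x = _
      rw [hk, wal1_split hb hk' ht, hd, e, mul_comm t t']
  rw [Finset.sum_congr rfl this, ← Finset.mul_sum, char_sum hb t 0 ht (by omega), if_neg (by omega),
    mul_zero]

lemma int_cell_ge {b k d : ℕ} (hb : 2 ≤ b) (hk : b ^ d ≤ k) (q : ℤ) :
    ∫ x in cell b d q, wal1 b k x = 0 := by
  have hk0 : k ≠ 0 := by
    have : 0 < b ^ d := by positivity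
    omega
  have h1 : b ^ (Nat.log b k) ≤ k := Nat.pow_log_le_self b hk0
  have h2 : k < b ^ (Nat.log b k + 1) := Nat.lt_pow_succ_log_self (by omega) k
  have h3 : d ≤ Nat.log b k := Nat.le_log_of_pow_le (by omega) hk
  set r := Nat.log b k
  clear_value r
  obtain ⟨e, rfl⟩ : ∃ e, r = d + e := ⟨r - d, by omega⟩
  clear hk h3
  induction e generalizing d q with
  | zero => exact int_cell_top hb h1 h2 q
  | succ e ih =>
    rw [int_cell_split hb]
    apply Finset.sum_eq_zero
    intro t _
    apply ih
    · rwa [show d + 1 + e = d + (e + 1) by ring]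
    · rwa [show d + 1 + e = d + (e + 1) by ring]

/-- one-dimensional indicator of a cell -/
def ind1 (b d : ℕ) (m : ℕ) (x : ℝ) : ℝ := if ⌊x * (b : ℝ) ^ d⌋ = (m : ℤ) then 1 else 0

/-- one-dimensional coefficient -/
def cf1 (b d m k : ℕ) : ℂ :=
  if k < b ^ d then ((b : ℂ) ^ d)⁻¹ * (starRingEnd ℂ) (wal1 b k ((m : ℝ) / (b : ℝ) ^ d)) else 0

lemma cell_sub {b d m : ℕ} (hb : 2 ≤ b) (hm : m < b ^ d) : cell b d m ⊆ Set.Ico (0 : ℝ) 1 := by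
  have : (0:ℝ) < (b : ℝ) ^ d := by positivity
  rw [cell_eq hb]
  apply Set.Ico_subset_Ico
  · positivity
  · rw [div_le_one this]
    exact_mod_cast hm

lemma int_ind1 {b d m : ℕ} (hb : 2 ≤ b) (hm : m < b ^ d) (k : ℕ) :
    ∫ x in Set.Ico (0 : ℝ) 1, ((ind1 b d m x : ℝ) : ℂ) * (starRingEnd ℂ) (wal1 b k x) =
      cf1 b d m k := by
  have e : (fun x => ((ind1 b d m x : ℝ) : ℂ) * (starRingEnd ℂ) (wal1 b k x)) =
      (cell b d m).indicator (fun x => (starRingEnd ℂ) (wal1 b k x)) := by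
    funext x
    by_cases h : ⌊x * (b : ℝ) ^ d⌋ = (m : ℤ)
    · rw [Set.indicator_of_mem (by exact h), ind1, if_pos h]; simp
    · rw [Set.indicator_of_notMem (by exact h), ind1, if_neg h]; simp
  rw [e, setIntegral_indicator (cell_meas hb _ _), Set.inter_eq_right.2 (cell_sub hb hm),
    integral_conj, cf1]
  split_ifs with hk
  · rw [int_cell_lt hb hk]; simp
  · rw [int_cell_ge hb (by omega)]; simp

lemma norm_cf1_le {b d m : ℕ} (hb : 2 ≤ b) (k : ℕ) : ‖cf1 b d m k‖ ≤ ((b : ℝ) ^ d)⁻¹ := by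
  rw [cf1]
  split_ifs
  · simp [norm_wal1 b k hb]
  · simp

lemma sum_cf1 {b d m : ℕ} (hb : 2 ≤ b) (hm : m < b ^ d) (x : ℝ) (hx : x ∈ Set.Ico (0 : ℝ) 1) :
    ∑ k ∈ Finset.range (b ^ d), cf1 b d m k * wal1 b k x = (ind1 b d m x : ℂ) := by
  have hp : (b : ℝ) ^ d ≠ 0 := by positivity
  have hpc : (b : ℂ) ^ d ≠ 0 := by exact_mod_cast hp
  have e : ∀ k ∈ Finset.range (b ^ d), cf1 b d m k * wal1 b k x =
      ((b : ℂ) ^ d)⁻¹ * (wal1 b k x * (starRingEnd ℂ) (wal1 b k ((m : ℝ) / (b : ℝ) ^ d))) := by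
    intro k hk
    rw [cf1, if_pos (Finset.mem_range.1 hk)]; ring
  have hfl : ⌊((m : ℝ) / (b : ℝ) ^ d) * (b : ℝ) ^ d⌋ = (m : ℤ) := by
    rw [div_mul_cancel₀ _ hp, Int.floor_natCast]
  have hy : ((m : ℝ) / (b : ℝ) ^ d) ∈ Set.Ico (0 : ℝ) 1 := cell_sub hb hm hfl
  have h0 : ⌊x⌋ = ⌊((m : ℝ) / (b : ℝ) ^ d)⌋ := by
    rw [Int.floor_eq_zero_iff.2 hx, Int.floor_eq_zero_iff.2 hy]
  rw [Finset.sum_congr rfl e, ← Finset.mul_sum, dirichlet hb, ind1]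
  have hiff := floor_eq_iff hb x _ h0 d
  rw [hfl] at hiff
  by_cases h : ⌊x * (b : ℝ) ^ d⌋ = (m : ℤ)
  · rw [if_pos h, if_pos (hiff.2 h), inv_mul_cancel₀ hpc]; simp
  · rw [if_neg h, if_neg (fun h' => h (hiff.1 h'))]; simp

/-- the fooling function -/
def fool (b d : ℕ) {s : ℕ} (m : Fin s → ℕ) (c : ℝ) (x : Fin s → ℝ) : ℝ :=
  c * ∏ j, ind1 b d (m j) (x j)

lemma coeff_fool {b d s : ℕ} (hb : 2 ≤ b) (m : Fin s → ℕ) (hm : ∀ j, m j < b ^ d) (c : ℝ)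
    (k : Fin s → ℕ) : walshCoeff b (fool b d m c) k = c * ∏ j, cf1 b d (m j) (k j) := by
  have e : ∀ x : Fin s → ℝ, (fool b d m c x : ℂ) * (starRingEnd ℂ) (wal b k x) =
      c * ∏ j, (((ind1 b d (m j) (x j) : ℝ) : ℂ) * (starRingEnd ℂ) (wal1 b (k j) (x j))) := by
    intro x
    rw [fool, wal, Finset.prod_mul_distrib, map_prod]; push_cast; ring
  rw [walshCoeff]
  simp_rw [e]
  rw [integral_const_mul, unitCube, volume_pi, Measure.restrict_pi_pi,
    integral_fintype_prod_eq_prod (f := fun j x =>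
      ((ind1 b d (m j) x : ℝ) : ℂ) * (starRingEnd ℂ) (wal1 b (k j) x))]
  simp_rw [int_ind1 hb (hm _)]

lemma hasSum_fool {b d s : ℕ} (hb : 2 ≤ b) (m : Fin s → ℕ) (hm : ∀ j, m j < b ^ d) (c : ℝ)
    (x : Fin s → ℝ) (hx : x ∈ unitCube s) :
    HasSum (fun k : Fin s → ℕ => walshCoeff b (fool b d m c) k * wal b k x)
      ((fool b d m c x : ℝ) : ℂ) := by
  have hx' : ∀ j, x j ∈ Set.Ico (0 : ℝ) 1 := fun j => hx j (Set.mem_univ j)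
  have : ((fool b d m c x : ℝ) : ℂ) =
      ∑ k ∈ Fintype.piFinset (fun _ : Fin s => Finset.range (b ^ d)),
        walshCoeff b (fool b d m c) k * wal b k x := by
    rw [fool]
    push_cast
    simp_rw [← sum_cf1 hb (hm _) _ (hx' _)]
    rw [Finset.prod_univ_sum, Finset.mul_sum]
    apply Finset.sum_congr rfl
    intro k _
    rw [coeff_fool hb m hm, wal, Finset.prod_mul_distrib]; ring
  rw [this]
  apply hasSum_sum_of_ne_finset_zero
  intro k hk
  simp only [Fintype.mem_piFinset, Finset.mem_range, not_forall] at hk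
  obtain ⟨j, hj⟩ := hk
  rw [coeff_fool hb m hm, Finset.prod_eq_zero (Finset.mem_univ j) (by rw [cf1, if_neg hj])]
  simp

lemma dickWt_le {b d k : ℕ} (hb : 2 ≤ b) (hk : k < b ^ d) (a : ℝ) (ha : 0 ≤ a) :
    dickWt b a k ≤ (d : ℝ) ^ 2 / 2 + (a + 1 / 2) * d := by
  rw [dickWt, sum_digits hb hk _ (by intro i hi; simp [hi])]
  calc _ ≤ ∑ i ∈ Finset.range d, ((i : ℝ) + 1 + a) := by
        apply Finset.sum_le_sum
        intro i _
        split_ifs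
        · rfl
        · positivity
    _ = (d : ℝ) ^ 2 / 2 + (a + 1 / 2) * d := by
        clear hk
        induction d with
        | zero => simp
        | succ d ih => rw [Finset.sum_range_succ, ih]; push_cast; ring

lemma norm_fool {b d s : ℕ} (hb : 2 ≤ b) (m : Fin s → ℕ) (hm : ∀ j, m j < b ^ d) (a : Fin s → ℝ)
    (ha : ∀ j, 0 ≤ a j) (c : ℝ)
    (hc : |c| = (b : ℝ) ^ (-(∑ j : Fin s, ((d : ℝ) ^ 2 / 2 + (a j + 1 / 2) * d))) *
      (b : ℝ) ^ (s * d)) (k : Fin s → ℕ) :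
    ‖walshCoeff b (fool b d m c) k‖ * (b : ℝ) ^ dickWtV b a k ≤ 1 := by
  have hb0 : (0 : ℝ) < b := by positivity
  have hb1 : (1 : ℝ) ≤ b := by exact_mod_cast (by omega : 1 ≤ b)
  rw [coeff_fool hb m hm]
  by_cases hk : ∀ j, k j < b ^ d
  · have h1 : ‖(c : ℂ) * ∏ j, cf1 b d (m j) (k j)‖ ≤
        (b : ℝ) ^ (-(∑ j : Fin s, ((d : ℝ) ^ 2 / 2 + (a j + 1 / 2) * d))) := by
      rw [norm_mul, norm_prod, Complex.norm_real, Real.norm_eq_abs, hc]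
      calc _ ≤ (b : ℝ) ^ (-(∑ j : Fin s, ((d : ℝ) ^ 2 / 2 + (a j + 1 / 2) * d))) *
            (b : ℝ) ^ (s * d) * ∏ _j : Fin s, ((b : ℝ) ^ d)⁻¹ := by
            gcongr with j
            exact norm_cf1_le hb _
        _ = _ := by
            rw [Finset.prod_const, Finset.card_univ, Fintype.card_fin, inv_pow, ← pow_mul,
              mul_comm d s, mul_assoc, mul_inv_cancel₀ (by positivity), mul_one]
    have h2 : (b : ℝ) ^ dickWtV b a k ≤
        (b : ℝ) ^ (∑ j : Fin s, ((d : ℝ) ^ 2 / 2 + (a j + 1 / 2) * d)) := by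
      apply Real.rpow_le_rpow_of_exponent_le hb1
      exact Finset.sum_le_sum fun j _ => dickWt_le hb (hk j) _ (ha j)
    calc _ ≤ _ := mul_le_mul h1 h2 (by positivity) (by positivity)
      _ = 1 := by rw [← Real.rpow_add hb0]; simp
  · push Not at hk
    obtain ⟨j, hj⟩ := hk
    rw [Finset.prod_eq_zero (Finset.mem_univ j) (by rw [cf1, if_neg (by omega)])]
    simp

lemma intBox_fool {b d s : ℕ} (hb : 2 ≤ b) (m : Fin s → ℕ) (hm : ∀ j, m j < b ^ d) (c : ℝ) :
    intBox s (fool b d m c) = c * ((b : ℝ) ^ (s * d))⁻¹ := by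
  have h := coeff_fool hb m hm c 0
  have hp : 0 < b ^ d := by positivity
  have hw : ∀ x, wal b (0 : Fin s → ℕ) x = 1 := by intro x; simp [wal, wal1]
  have hc : ∀ j, cf1 b d (m j) 0 = ((b : ℂ) ^ d)⁻¹ := by
    intro j; rw [cf1, if_pos hp]; simp [wal1]
  rw [walshCoeff] at h
  simp only [hw, map_one, mul_one, Pi.zero_apply, hc] at h
  rw [integral_complex_ofReal, Finset.prod_const, Finset.card_univ, Fintype.card_fin, inv_pow,
    ← pow_mul, mul_comm d s] at h
  rw [intBox]
  apply Complex.ofReal_injective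
  rw [h]
  push_cast
  rfl

/-- for nonnegative nondecreasing weights and `n < b^{s·d}`,
`e(n, s, W_{s,a}) ≥ b^{-∑_{j=1}^s (d²/2 + (a_j + 1/2)·d)}`. -/
theorem statement6 (b : ℕ) (hb : 2 ≤ b) (s : ℕ) (hs : 0 < s) (d : ℕ) (hd : 0 < d)
    (a : ℕ → ℝ) (ha : Monotone a) (ha0 : ∀ j, 0 ≤ a j)
    (n : ℕ) (hn : n < b ^ (s * d)) :
    ENNReal.ofReal
        ((b : ℝ) ^ (-(∑ j : Fin s, ((d : ℝ) ^ 2 / 2 + (a j + 1 / 2) * d)))) ≤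
      minErr n s {f | MemW b (fun j : Fin s => a j) f} (normW b (fun j : Fin s => a j)) := by
  unfold minErr
  refine le_iInf fun t => le_iInf fun ht => le_iInf fun φ => ?_
  -- an empty cell
  have hb0 : (0 : ℝ) < b := by positivity
  have hp : (0:ℝ) < (b : ℝ) ^ d := by positivity
  have hfl : ∀ i j, 0 ≤ ⌊t i j * (b : ℝ) ^ d⌋ ∧ ⌊t i j * (b : ℝ) ^ d⌋ < ((b ^ d : ℕ) : ℤ) := by
    intro i j
    have h := ht i j (Set.mem_univ j)
    constructor
    · exact Int.floor_nonneg.2 (mul_nonneg h.1 hp.le)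
    · rw [Int.floor_lt]
      push_cast
      nlinarith [h.2]
  obtain ⟨m, hm⟩ : ∃ m : Fin s → Fin (b ^ d), ∀ i,
      m ≠ fun j => ⟨(⌊t i j * (b : ℝ) ^ d⌋).toNat, by have := hfl i j; omega⟩ := by
    by_contra hcon
    push Not at hcon
    have hsurj : Function.Surjective (fun (i : Fin n) (j : Fin s) =>
        (⟨(⌊t i j * (b : ℝ) ^ d⌋).toNat, by have := hfl i j; omega⟩ : Fin (b ^ d))) := by
      intro m
      obtain ⟨i, hi⟩ := hcon m
      exact ⟨i, hi.symm⟩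
    have := Fintype.card_le_of_surjective _ hsurj
    simp only [Fintype.card_fun, Fintype.card_fin] at this
    rw [← pow_mul, mul_comm d s] at this
    omega
  set M := (b : ℝ) ^ (-(∑ j : Fin s, ((d : ℝ) ^ 2 / 2 + (a j + 1 / 2) * d))) with hM
  have hM0 : 0 < M := by positivity
  let mm : Fin s → ℕ := fun j => m j
  have hmm : ∀ j, mm j < b ^ d := fun j => (m j).2
  have hz : ∀ c, (fun i => fool b d mm c (t i)) = 0 := by
    intro c
    funext i
    have : ∃ j, ⌊t i j * (b : ℝ) ^ d⌋ ≠ (mm j : ℤ) := by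
      by_contra hcon
      push Not at hcon
      apply hm i
      funext j
      apply Fin.ext
      have := hcon j
      simp only [mm] at this
      simp [this]
    obtain ⟨j, hj⟩ := this
    rw [fool, Finset.prod_eq_zero (Finset.mem_univ j) (by rw [ind1, if_neg hj])]
    simp
  have key : ∀ c : ℝ, |c| = M * (b : ℝ) ^ (s * d) →
      ENNReal.ofReal |c * ((b : ℝ) ^ (s * d))⁻¹ - φ 0| ≤
      worstErr s {f | MemW b (fun j : Fin s => a j) f} (normW b (fun j : Fin s => a j))
        fun f => φ fun i => f (t i) := by
    intro c hc
    have hn := norm_fool hb mm hmm (fun j : Fin s => a j) (fun j => ha0 j) c hc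
    unfold worstErr
    refine le_trans ?_ (le_iSup₂_of_le (fool b d mm c) ?_ (le_iSup_of_le ?_ le_rfl))
    · beta_reduce
      rw [hz c, intBox_fool hb mm hmm]
    · exact ⟨hasSum_fool hb mm hmm c, 1, by rintro _ ⟨k, rfl⟩; exact hn k⟩
    · exact ciSup_le hn
  have hB : (0:ℝ) < (b : ℝ) ^ (s * d) := by positivity
  have k1 := key (M * (b : ℝ) ^ (s * d)) (abs_of_pos (by positivity))
  have k2 := key (-(M * (b : ℝ) ^ (s * d))) (by rw [abs_neg, abs_of_pos (by positivity)])
  rw [mul_assoc, mul_inv_cancel₀ hB.ne', mul_one] at k1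
  rw [neg_mul, mul_assoc, mul_inv_cancel₀ hB.ne', mul_one] at k2
  rcases le_total (φ 0) 0 with h | h
  · refine le_trans (ENNReal.ofReal_le_ofReal ?_) k1
    exact le_trans (by linarith) (le_abs_self _)
  · refine le_trans (ENNReal.ofReal_le_ofReal ?_) k2
    exact le_trans (by linarith) (neg_le_abs _)

end
end
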